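/- Let T > 0 and let q : ℝ → ℝ be a T-periodic locally integrable function satisfying the mean value condition (q#) and the sign condition (q*). Let g ∈ C¹([0,∞)) satisfy (g*) and (gs). Then the equation u'' + q(t) g(u) = 0 has at least one positive T-periodic solution. -/

import Mathlib

open MeasureTheory Set Filter

/-- `u` is a solution of `u'' + F(t,u) = 0`: `u` is of class `C¹` and its derivative `u'`
is locally absolutely continuous (it is the integral of a locally integrable function),
with `u'' + F(t, u(t)) = 0` for a.e. `t`. -/
def IsSol (F : ℝ → ℝ → ℝ) (u : ℝ → ℝ) : Prop :=
  ∃ u' : ℝ → ℝ,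
    (∀ t, HasDerivAt u (u' t) t) ∧
    MeasureTheory.LocallyIntegrable (fun s => F s (u s)) MeasureTheory.volume ∧
    ∀ t, u' t = u' 0 - ∫ s in (0:ℝ)..t, F s (u s)

/-- `q ≻ 0` on `I` : `q ≥ 0` a.e. on `I` and `q ≢ 0` on `I`. -/
def PosOn (q : ℝ → ℝ) (I : Set ℝ) : Prop :=
  (∀ᵐ t ∂(MeasureTheory.volume.restrict I), 0 ≤ q t) ∧
  ¬ (∀ᵐ t ∂(MeasureTheory.volume.restrict I), q t = 0)

/-- Condition `(q*)`: `[0,T]` splits into `m` closed intervals where `q ≻ 0`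
separated by `m` closed intervals where `q ≺ 0`. -/
def SignCond (q : ℝ → ℝ) (T : ℝ) (m : ℕ) : Prop :=
  ∃ σ : ℕ → ℝ, σ 0 = 0 ∧ σ (2*m) = T ∧ (∀ i < 2*m, σ i < σ (i+1)) ∧
    (∀ i < m, PosOn q (Set.Icc (σ (2*i)) (σ (2*i+1)))) ∧
    (∀ i < m, PosOn (fun t => - q t) (Set.Icc (σ (2*i+1)) (σ (2*i+2))))

/-- A subharmonic solution of order `k`: `kT`-periodic but not `ℓT`-periodic
for `ℓ = 1, …, k-1`. -/
def IsSubharmonic (u : ℝ → ℝ) (T : ℝ) (k : ℕ) : Prop :=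
  Function.Periodic u (k * T) ∧ ∀ ℓ : ℕ, 1 ≤ ℓ → ℓ < k → ¬ Function.Periodic u (ℓ * T)

/-- `u` and `v` belong to the same periodicity class. -/
def SameClass (u v : ℝ → ℝ) (T : ℝ) : Prop :=
  ∃ ℓ : ℤ, ∀ t, v t = u (t + ℓ * T)

open scoped NNReal

/-!
Shooting for the Poincaré map. Replace `g` outside a bounded interval by a globally Lipschitz `G`
that vanishes on `(-∞, 0]` and keeps the lower bound `K * s ≤ G s`, and consider the displacement
`(u 0, u' 0) ↦ (u T - u 0, u' T - u' 0)` of `u'' + q G(u) = 0` on a rectangle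
`[ε, R] × [-R, R]` of initial data.

* Where `q ≥ 0`, a nonnegative solution is concave; a large one would stay large on a middle
  interval, where the strong restoring force contradicts concavity. This bounds nonnegative
  solutions on the intervals where `q ≥ 0`, so `u T < u 0` on the three sides of the rectangle away
  from `{ε} × [-R, R]`.
* On that side, solutions with `u T = u 0` are positive on `[0, T]`. If `u' 0` is bounded away from
  `0`, the sign of `u' T - u' 0` follows from positivity; otherwise the solution is small, hence
  nearly constant, and `u' T - u' 0 ≈ -G(u) ∫ q > 0` by the mean value condition.

A displacement without zeros, seen as a complex number, would have a continuous argument on the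
rectangle, which these boundary signs exclude; so the displacement has a zero. Solutions that become
nonpositive with `u' ≤ 0` stay nonpositive, so the zero is a positive periodic solution. It
satisfies the a priori bound on the whole period, being convex where `q ≤ 0`, and therefore solves
the original equation.
-/

section ZeroOfPlanarMap

variable {X : Type*} [TopologicalSpace X]

lemma exists_continuous_arg [SimplyConnectedSpace X] [LocallyPathConnectedSpace X] {F : X → ℂ}
    (hF : Continuous F) (hF0 : ∀ x, F x ≠ 0) (p : X) :
    ∃ φ : X → ℝ, Continuous φ ∧ φ p = (F p).arg ∧
      ∀ x, F x = ‖F x‖ * Complex.exp (φ x * Complex.I) := by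
  have hnorm : ∀ x, (‖F x‖ : ℂ) ≠ 0 := fun x => by exact_mod_cast norm_ne_zero_iff.mpr (hF0 x)
  let direction : C(X, Circle) :=
    ⟨fun x => ⟨F x / ‖F x‖, mem_sphere_zero_iff_norm.mpr (by simp [hF0 x])⟩,
      Continuous.subtype_mk (hF.div (by fun_prop) hnorm) _⟩
  have hdirection : Circle.exp (F p).arg = direction p := Circle.ext <| by
    rw [Circle.coe_exp]
    exact (eq_div_iff (hnorm p)).mpr (by rw [mul_comm, Complex.norm_mul_exp_arg_mul_I])
  obtain ⟨φ, ⟨hφp, hφ⟩, -⟩ := Circle.isCoveringMap_exp.existsUnique_continuousMap_lifts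
    direction p (F p).arg hdirection
  refine ⟨φ, φ.continuous, hφp, fun x => ?_⟩
  have hx : Complex.exp (φ x * Complex.I) = F x / ‖F x‖ := by
    rw [← Circle.coe_exp]
    exact congrArg Subtype.val (congrFun hφ x)
  rw [hx, mul_div_cancel₀ _ (hnorm x)]

lemma pi_div_two_lt_of_isPreconnected {φ : X → ℝ} (hφ : Continuous φ) {S : Set X}
    (hS : IsPreconnected S) {p q : X} (hp : p ∈ S) (hq : q ∈ S)
    (hφp : -(Real.pi / 2) < φ p) (hφq : Real.cos (φ q) < 0)
    (hsin : ∀ x ∈ S, Real.cos (φ x) = 0 → 0 < Real.sin (φ x)) : Real.pi / 2 < φ q := by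
  have hlower : -(Real.pi / 2) < φ q := by
    by_contra! hle
    obtain ⟨x, hx, hxφ⟩ := hS.intermediate_value hq hp hφ.continuousOn ⟨hle, hφp.le⟩
    have := hsin x hx (by simp [hxφ])
    rw [hxφ, Real.sin_neg, Real.sin_pi_div_two] at this
    linarith
  by_contra! hle
  exact hφq.not_ge (Real.cos_nonneg_of_mem_Icc ⟨hlower.le, hle⟩)

-- From `p`, where `|arg F| < π / 2`, a continuous argument exceeds `π / 2` at `a` and drops below
-- `-π / 2` at `b`, so it vanishes somewhere on `C`.
theorem exists_eq_zero_of_isPreconnected [SimplyConnectedSpace X] [LocallyPathConnectedSpace X]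
    {F : X → ℂ} (hF : Continuous F) {A B C : Set X} (hA : IsPreconnected A)
    (hB : IsPreconnected B) (hC : IsPreconnected C) {p a b : X} (hp : p ∈ A ∩ B)
    (ha : a ∈ A ∩ C) (hb : b ∈ B ∩ C) (hFp : 0 < (F p).re)
    (hFA : ∀ x ∈ A, (F x).re = 0 → 0 < (F x).im) (hFB : ∀ x ∈ B, (F x).re = 0 → (F x).im < 0)
    (hFC : ∀ x ∈ C, (F x).re < 0) : ∃ x, F x = 0 := by
  by_contra! hF0
  obtain ⟨φ, hφ, hφp, hpolar⟩ := exists_continuous_arg hF hF0 p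
  have hnorm : ∀ x, 0 < ‖F x‖ := fun x => norm_pos_iff.mpr (hF0 x)
  have hre : ∀ x, (F x).re = ‖F x‖ * Real.cos (φ x) := fun x => by
    simpa [Complex.exp_ofReal_mul_I_re] using congrArg Complex.re (hpolar x)
  have him : ∀ x, (F x).im = ‖F x‖ * Real.sin (φ x) := fun x => by
    simpa [Complex.exp_ofReal_mul_I_im] using congrArg Complex.im (hpolar x)
  have hcos : ∀ x ∈ C, Real.cos (φ x) < 0 := fun x hx =>
    neg_of_mul_neg_right (hre x ▸ hFC x hx) (hnorm x).le
  obtain ⟨hpl, hpu⟩ : -(Real.pi / 2) < φ p ∧ φ p < Real.pi / 2 :=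
    abs_lt.mp (hφp ▸ Complex.abs_arg_lt_pi_div_two_iff.mpr (Or.inl hFp))
  have hφa : Real.pi / 2 < φ a :=
    pi_div_two_lt_of_isPreconnected hφ hA hp.1 ha.1 hpl (hcos a ha.2) fun x hx hx0 =>
      pos_of_mul_pos_right (him x ▸ hFA x hx (by rw [hre, hx0, mul_zero])) (hnorm x).le
  have hφb : Real.pi / 2 < -φ b :=
    pi_div_two_lt_of_isPreconnected hφ.neg hB hp.2 hb.1 (neg_lt_neg hpu)
      (by simpa using hcos b hb.2) fun x hx hx0 => by
        rw [Pi.neg_apply, Real.cos_neg] at hx0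
        rw [Pi.neg_apply, Real.sin_neg, Left.neg_pos_iff]
        exact neg_of_mul_neg_right (him x ▸ hFB x hx (by rw [hre, hx0, mul_zero])) (hnorm x).le
  obtain ⟨x, hx, hxφ⟩ := hC.intermediate_value hb.2 ha.2 hφ.continuousOn
    (show (0 : ℝ) ∈ Icc (φ b) (φ a) from
      ⟨by linarith [Real.pi_pos], by linarith [Real.pi_pos]⟩)
  have := hcos x hx
  rw [hxφ, Real.cos_zero] at this
  linarith

lemma isPreconnected_three_edges {a b c d : ℝ} (hab : a ≤ b) (hcd : c ≤ d) :
    IsPreconnected ((fun x => (x, c)) '' Icc a b ∪ (fun y => (b, y)) '' Icc c d ∪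
      (fun x => (x, d)) '' Icc a b) := by
  have hhoriz : ∀ y : ℝ, IsPreconnected ((fun x : ℝ => (x, y)) '' Icc a b) := fun y =>
    isPreconnected_Icc.image _ (by fun_prop)
  have hvert : IsPreconnected ((fun y : ℝ => (b, y)) '' Icc c d) :=
    isPreconnected_Icc.image _ (by fun_prop)
  have hb := right_mem_Icc.mpr hab
  refine IsPreconnected.union (b, d) (Or.inr ⟨d, right_mem_Icc.mpr hcd, rfl⟩) ⟨b, hb, rfl⟩ ?_
    (hhoriz d)
  exact (hhoriz c).union (b, c) ⟨b, hb, rfl⟩ ⟨c, left_mem_Icc.mpr hcd, rfl⟩ hvert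

theorem exists_eq_zero_of_rectangle {F : ℝ × ℝ → ℂ} (hF : Continuous F) {a b c d y₀ : ℝ}
    (hab : a ≤ b) (hc : c ≤ y₀) (hd : y₀ ≤ d)
    (hbot : ∀ x ∈ Icc a b, (F (x, c)).re < 0) (htop : ∀ x ∈ Icc a b, (F (x, d)).re < 0)
    (hright : ∀ y ∈ Icc c d, (F (b, y)).re < 0) (hmid : 0 < (F (a, y₀)).re)
    (hlow : ∀ y ∈ Icc c y₀, (F (a, y)).re = 0 → 0 < (F (a, y)).im)
    (hup : ∀ y ∈ Icc y₀ d, (F (a, y)).re = 0 → (F (a, y)).im < 0) :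
    ∃ z ∈ Icc a b ×ˢ Icc c d, F z = 0 := by
  have hcd := hc.trans hd
  let P : ℝ × ℝ → ℝ × ℝ := fun z => (projIcc a b hab z.1, projIcc c d hcd z.2)
  have hP : Continuous P := by fun_prop
  have hPid : ∀ x ∈ Icc a b, ∀ y ∈ Icc c d, P (x, y) = (x, y) := fun x hx y hy => by
    simp only [P, projIcc_of_mem hab hx, projIcc_of_mem hcd hy]
  have ha : a ∈ Icc a b := left_mem_Icc.mpr hab
  have hb : b ∈ Icc a b := right_mem_Icc.mpr hab
  have hc' : c ∈ Icc c d := left_mem_Icc.mpr hcd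
  have hd' : d ∈ Icc c d := right_mem_Icc.mpr hcd
  have hvert : ∀ s t : ℝ, IsPreconnected ((fun y : ℝ => (a, y)) '' Icc s t) := fun s t =>
    isPreconnected_Icc.image _ (by fun_prop)
  obtain ⟨z, hz⟩ := exists_eq_zero_of_isPreconnected (hF.comp hP) (hvert c y₀) (hvert y₀ d)
    (isPreconnected_three_edges hab hcd) (p := (a, y₀)) (a := (a, c)) (b := (a, d))
    ⟨⟨y₀, right_mem_Icc.mpr hc, rfl⟩, ⟨y₀, left_mem_Icc.mpr hd, rfl⟩⟩
    ⟨⟨c, left_mem_Icc.mpr hc, rfl⟩, Or.inl (Or.inl ⟨a, ha, rfl⟩)⟩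
    ⟨⟨d, right_mem_Icc.mpr hd, rfl⟩, Or.inr ⟨a, ha, rfl⟩⟩
    (by simpa only [Function.comp, hPid a ha y₀ ⟨hc, hd⟩] using hmid)
    (by
      rintro _ ⟨y, hy, rfl⟩
      simpa only [Function.comp, hPid a ha y ⟨hy.1, hy.2.trans hd⟩] using hlow y hy)
    (by
      rintro _ ⟨y, hy, rfl⟩
      simpa only [Function.comp, hPid a ha y ⟨hc.trans hy.1, hy.2⟩] using hup y hy)
    (by
      rintro _ ((⟨x, hx, rfl⟩ | ⟨y, hy, rfl⟩) | ⟨x, hx, rfl⟩)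
      · simpa only [Function.comp, hPid x hx c hc'] using hbot x hx
      · simpa only [Function.comp, hPid b hb y hy] using hright y hy
      · simpa only [Function.comp, hPid x hx d hd'] using htop x hx)
  exact ⟨P z, ⟨Subtype.property _, Subtype.property _⟩, hz⟩

end ZeroOfPlanarMap

section Gronwall

lemma intervalIntegrable_of_locallyIntegrable {E : Type*} [NormedAddCommGroup E] {f : ℝ → E}
    (hf : LocallyIntegrable f volume) (a b : ℝ) : IntervalIntegrable f volume a b :=
  (hf.integrableOn_isCompact isCompact_uIcc).intervalIntegrable

lemma continuous_integral_of_locallyIntegrable {E : Type*} [NormedAddCommGroup E]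
    [NormedSpace ℝ E] {f : ℝ → E} (hf : LocallyIntegrable f volume) (a : ℝ) :
    Continuous fun t => ∫ s in a..t, f s :=
  intervalIntegral.continuous_primitive (intervalIntegrable_of_locallyIntegrable hf) a

lemma absolutelyContinuousOnInterval_comp_of_lipschitzOnWith {f g : ℝ → ℝ} {a b : ℝ}
    {K : ℝ≥0} (hf : AbsolutelyContinuousOnInterval f a b)
    (hg : LipschitzOnWith K g (f '' uIcc a b)) :
    AbsolutelyContinuousOnInterval (fun x => g (f x)) a b := by
  have hlim := Tendsto.const_mul (K : ℝ) hf
  rw [mul_zero] at hlim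
  refine squeeze_zero' (Eventually.of_forall fun E => Finset.sum_nonneg fun _ _ => dist_nonneg)
    ?_ hlim
  filter_upwards [mem_inf_of_right (mem_principal_self _)] with E hE
  rw [Finset.mul_sum]
  exact Finset.sum_le_sum fun i hi => hg.dist_le_mul _ (mem_image_of_mem f (hE.1 i hi).1) _
    (mem_image_of_mem f (hE.1 i hi).2)

theorem integral_mul_comp_integral {k φ : ℝ → ℝ} (hk : LocallyIntegrable k volume)
    (hφ : Continuous φ) (a b : ℝ) :
    ∫ s in a..b, k s * φ (∫ r in a..s, k r) = ∫ x in 0..∫ s in a..b, k s, φ x := by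
  set W : ℝ → ℝ := fun t => ∫ r in a..t, k r
  set H : ℝ → ℝ := fun w => ∫ x in 0..w, φ x
  have hH : ∀ w, HasDerivAt H (φ w) w := fun w => hφ.integral_hasStrictDerivAt 0 w |>.hasDerivAt
  have hHC1 : ContDiff ℝ 1 H := contDiff_one_iff_deriv.mpr
    ⟨fun w => (hH w).differentiableAt, by rwa [funext fun w => (hH w).deriv]⟩
  have hWcompact : IsCompact (W '' uIcc a b) :=
    isCompact_uIcc.image (continuous_integral_of_locallyIntegrable hk a)
  obtain ⟨K, hK⟩ :=
    hHC1.locallyLipschitz.locallyLipschitzOn.exists_lipschitzOnWith_of_compact hWcompact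
  have hAC : AbsolutelyContinuousOnInterval (fun t => H (W t)) a b :=
    absolutelyContinuousOnInterval_comp_of_lipschitzOnWith
      ((intervalIntegrable_of_locallyIntegrable hk a b
        ).absolutelyContinuousOnInterval_intervalIntegral left_mem_uIcc) hK
  have hderiv : ∀ᵐ s, deriv (fun t => H (W t)) s = k s * φ (W s) := by
    filter_upwards [LocallyIntegrable.ae_hasDerivAt_integral hk] with s hs
    exact ((hH (W s)).comp s (hs a)).deriv.trans (mul_comm _ _)
  calc ∫ s in a..b, k s * φ (W s) = ∫ s in a..b, deriv (fun t => H (W t)) s :=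
        intervalIntegral.integral_congr_ae (hderiv.mono fun s hs _ => hs.symm)
    _ = H (W b) - H (W a) := hAC.integral_deriv_eq_sub
    _ = H (W b) := by simp [W, H]

lemma abs_integral_exp_two_mul_abs_le (w : ℝ) :
    |∫ x in 0..w, Real.exp (2 * |x|)| ≤ Real.exp (2 * |w|) / 2 := by
  wlog hw : 0 ≤ w generalizing w
  · have hodd := intervalIntegral.integral_comp_neg (fun x => Real.exp (2 * |x|)) (a := 0) (b := w)
    simp only [abs_neg, neg_zero] at hodd
    rw [hodd, intervalIntegral.integral_symm, abs_neg, ← abs_neg w]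
    exact this (-w) (by linarith)
  have hint : ∫ x in 0..w, Real.exp (2 * |x|) = (Real.exp (2 * w) - 1) / 2 := by
    calc ∫ x in 0..w, Real.exp (2 * |x|) = ∫ x in 0..w, Real.exp (2 * x) :=
          intervalIntegral.integral_congr fun x hx => by
            rw [uIcc_of_le hw] at hx
            simp only [abs_of_nonneg hx.1]
      _ = (Real.exp (2 * w) - 1) / 2 := by
          rw [intervalIntegral.integral_comp_mul_left _ two_ne_zero, integral_exp, mul_zero,
            Real.exp_zero, smul_eq_mul, inv_mul_eq_div]
  have hone : 1 ≤ Real.exp (2 * w) := Real.one_le_exp (by linarith)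
  rw [hint, abs_of_nonneg (by linarith), abs_of_nonneg hw]
  linarith

/-- Bielecki weight: in the supremum norm weighted by its inverse, integration against `k` from `t₀`
is a contraction on the whole line. -/
noncomputable def bieleckiWeight (k : ℝ → ℝ≥0) (t₀ t : ℝ) : ℝ :=
  Real.exp (2 * |∫ r in t₀..t, (k r : ℝ)|)

variable {k : ℝ → ℝ≥0} {t₀ t : ℝ}

lemma one_le_bieleckiWeight (k : ℝ → ℝ≥0) (t₀ t : ℝ) : 1 ≤ bieleckiWeight k t₀ t :=
  Real.one_le_exp (by positivity)

lemma bieleckiWeight_pos (k : ℝ → ℝ≥0) (t₀ t : ℝ) : 0 < bieleckiWeight k t₀ t :=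
  Real.exp_pos _

lemma continuous_bieleckiWeight (hk : LocallyIntegrable (fun s => (k s : ℝ)) volume) (t₀ : ℝ) :
    Continuous (bieleckiWeight k t₀) := by
  have := continuous_integral_of_locallyIntegrable hk t₀
  unfold bieleckiWeight
  fun_prop

lemma norm_integral_le_mul_bieleckiWeight {E : Type*} [NormedAddCommGroup E] [NormedSpace ℝ E]
    (hk : LocallyIntegrable (fun s => (k s : ℝ)) volume) {f : ℝ → E} {K : ℝ} (hK : 0 ≤ K)
    (hf : ∀ s ∈ uIcc t₀ t, ‖f s‖ ≤ K * (k s * bieleckiWeight k t₀ s)) :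
    ‖∫ s in t₀..t, f s‖ ≤ K * (bieleckiWeight k t₀ t / 2) := by
  have hint : IntervalIntegrable (fun s => K * (k s * bieleckiWeight k t₀ s)) volume t₀ t :=
    ((intervalIntegrable_of_locallyIntegrable hk t₀ t).mul_continuousOn
      (continuous_bieleckiWeight hk t₀).continuousOn).const_mul K
  calc ‖∫ s in t₀..t, f s‖ ≤ |∫ s in t₀..t, K * (k s * bieleckiWeight k t₀ s)| :=
        intervalIntegral.norm_integral_le_abs_of_norm_le
          ((ae_restrict_iff' measurableSet_uIoc).mpr <|
            Eventually.of_forall fun s hs => hf s (uIoc_subset_uIcc hs)) hint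
    _ = K * |∫ x in 0..∫ s in t₀..t, (k s : ℝ), Real.exp (2 * |x|)| := by
        rw [← integral_mul_comp_integral hk (φ := fun x => Real.exp (2 * |x|)) (by fun_prop),
          intervalIntegral.integral_const_mul, abs_mul, abs_of_nonneg hK]
        rfl
    _ ≤ _ := mul_le_mul_of_nonneg_left (abs_integral_exp_two_mul_abs_le _) hK

-- Maximise `φ` against the weight: the integral then costs at most half of the maximum.
theorem le_mul_bieleckiWeight_of_le_add_abs_integral
    (hk : LocallyIntegrable (fun s => (k s : ℝ)) volume) {C : ℝ} {φ : ℝ → ℝ}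
    (hφ : Continuous φ) (hφ0 : ∀ s, 0 ≤ φ s)
    (h : ∀ s ∈ uIcc t₀ t, φ s ≤ C + |∫ r in t₀..s, k r * φ r|) :
    φ t ≤ 2 * C * bieleckiWeight k t₀ t := by
  set w := bieleckiWeight k t₀
  have hw0 : ∀ s, 0 < w s := bieleckiWeight_pos k t₀
  have hquot : Continuous fun s => φ s / w s :=
    hφ.div (continuous_bieleckiWeight hk t₀) fun s => (hw0 s).ne'
  obtain ⟨s, hs, hmax⟩ :=
    isCompact_uIcc.exists_isMaxOn (nonempty_uIcc (a := t₀) (b := t)) hquot.continuousOn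
  have hφle : ∀ r ∈ uIcc t₀ t, φ r ≤ φ s / w s * w r := fun r hr =>
    (div_le_iff₀ (hw0 r)).mp (hmax hr)
  have hint : |∫ r in t₀..s, k r * φ r| ≤ φ s / w s * (w s / 2) :=
    norm_integral_le_mul_bieleckiWeight hk (div_nonneg (hφ0 s) (hw0 s).le) fun r hr => by
      rw [Real.norm_of_nonneg (mul_nonneg (k r).2 (hφ0 r)), mul_left_comm]
      exact mul_le_mul_of_nonneg_left (hφle r (uIcc_subset_uIcc_left hs hr)) (k r).2
  have hφs : φ s ≤ 2 * C := by
    have hhalf : φ s / w s * (w s / 2) = φ s / 2 := by field_simp [(hw0 s).ne']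
    linarith [h s hs]
  calc φ t ≤ φ s / w s * w t := hφle t right_mem_uIcc
    _ ≤ φ s * w t := mul_le_mul_of_nonneg_right
        (div_le_self (hφ0 s) (one_le_bieleckiWeight k t₀ s)) (hw0 t).le
    _ ≤ 2 * C * w t := mul_le_mul_of_nonneg_right hφs (hw0 t).le

end Gronwall

section Caratheodory

variable {E : Type*} [NormedAddCommGroup E] {f : ℝ → E → E} {k : ℝ → ℝ≥0} {X Y : ℝ → E}

/-- Globally Lipschitz Carathéodory right-hand sides `f (t, X)`: Lipschitz in `X` and of linear
growth with the locally integrable rate `k t`, measurable along continuous curves. -/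
structure IsCaratheodory (f : ℝ → E → E) (k : ℝ → ℝ≥0) : Prop where
  locallyIntegrable : LocallyIntegrable (fun s => (k s : ℝ)) volume
  lipschitzWith : ∀ s, LipschitzWith (k s) (f s)
  norm_zero_le : ∀ s, ‖f s 0‖ ≤ k s
  aestronglyMeasurable : ∀ X : ℝ → E, Continuous X →
    AEStronglyMeasurable (fun s => f s (X s)) volume

lemma IsCaratheodory.intervalIntegrable (hf : IsCaratheodory f k) (hX : Continuous X) (a b : ℝ) :
    IntervalIntegrable (fun s => f s (X s)) volume a b := by
  have hbound : IntervalIntegrable (fun s => k s * (‖X s‖ + 1)) volume a b :=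
    (intervalIntegrable_of_locallyIntegrable hf.locallyIntegrable a b).mul_continuousOn
      (by fun_prop)
  refine hbound.mono_fun (hf.aestronglyMeasurable X hX).restrict
    (Eventually.of_forall fun s => ?_)
  calc ‖f s (X s)‖ ≤ ‖f s (X s) - f s 0‖ + ‖f s 0‖ := norm_le_norm_sub_add _ _
    _ ≤ k s * ‖X s - 0‖ + k s :=
        add_le_add ((hf.lipschitzWith s).norm_sub_le _ _) (hf.norm_zero_le s)
    _ = k s * (‖X s‖ + 1) := by rw [sub_zero]; ring
    _ ≤ ‖k s * (‖X s‖ + 1)‖ := le_abs_self _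

variable [NormedSpace ℝ E]

/-- Carathéodory solutions of `X' = f (t, X)` on the whole line, in integral form. -/
structure IsCaratheodorySol (f : ℝ → E → E) (X : ℝ → E) : Prop where
  continuous : Continuous X
  sub_eq_integral : ∀ s t, X t - X s = ∫ r in s..t, f r (X r)

namespace IsCaratheodory

lemma norm_sub_le (hf : IsCaratheodory f k) (hX : IsCaratheodorySol f X)
    (hY : IsCaratheodorySol f Y) (s t : ℝ) :
    ‖X t - Y t‖ ≤ 2 * ‖X s - Y s‖ * bieleckiWeight k s t := by
  have hXc := hX.continuous
  have hYc := hY.continuous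
  refine le_mul_bieleckiWeight_of_le_add_abs_integral hf.locallyIntegrable
    (φ := fun r => ‖X r - Y r‖) (by fun_prop) (fun _ => norm_nonneg _) fun r _ => ?_
  have hdiff : X r - Y r = (X s - Y s) + ∫ τ in s..r, (f τ (X τ) - f τ (Y τ)) := by
    rw [intervalIntegral.integral_sub (hf.intervalIntegrable hXc s r)
      (hf.intervalIntegrable hYc s r), ← hX.sub_eq_integral, ← hY.sub_eq_integral]
    abel
  have hint : IntervalIntegrable (fun τ => k τ * ‖X τ - Y τ‖) volume s r :=
    (intervalIntegrable_of_locallyIntegrable hf.locallyIntegrable s r).mul_continuousOn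
      (by fun_prop)
  calc ‖X r - Y r‖ ≤ ‖X s - Y s‖ + ‖∫ τ in s..r, (f τ (X τ) - f τ (Y τ))‖ :=
        hdiff ▸ norm_add_le _ _
    _ ≤ ‖X s - Y s‖ + |∫ τ in s..r, k τ * ‖X τ - Y τ‖| := by
        gcongr
        exact intervalIntegral.norm_integral_le_abs_of_norm_le
          (Eventually.of_forall fun τ => (hf.lipschitzWith τ).norm_sub_le _ _) hint

theorem eq_of_eq (hf : IsCaratheodory f k) (hX : IsCaratheodorySol f X)
    (hY : IsCaratheodorySol f Y) {s : ℝ} (h : X s = Y s) : X = Y := by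
  funext t
  simpa [h, sub_eq_zero] using hf.norm_sub_le hX hY s t

/-- The Picard operator of `f` with initial value `x` at time `t₀`, conjugated by the Bielecki
weight so that it acts on bounded functions. -/
noncomputable def weightedPicard (f : ℝ → E → E) (k : ℝ → ℝ≥0) (t₀ : ℝ) (x : E) (V : ℝ → E)
    (t : ℝ) : E :=
  (bieleckiWeight k t₀ t)⁻¹ • (x + ∫ s in t₀..t, f s (bieleckiWeight k t₀ s • V s))

lemma continuous_weightedPicard (hf : IsCaratheodory f k) {t₀ : ℝ} {x : E} {V : ℝ → E}
    (hV : Continuous V) : Continuous (weightedPicard f k t₀ x V) := by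
  have hw := continuous_bieleckiWeight hf.locallyIntegrable t₀
  have hprim := intervalIntegral.continuous_primitive (hf.intervalIntegrable (hw.smul hV)) t₀
  exact (hw.inv₀ fun t => (bieleckiWeight_pos k t₀ t).ne').smul (continuous_const.add hprim)

lemma weightedPicard_sub (hf : IsCaratheodory f k) {t₀ : ℝ} {x : E} {V U : ℝ → E}
    (hV : Continuous V) (hU : Continuous U) (t : ℝ) :
    weightedPicard f k t₀ x V t - weightedPicard f k t₀ x U t =
      (bieleckiWeight k t₀ t)⁻¹ • ∫ s in t₀..t,
        (f s (bieleckiWeight k t₀ s • V s) - f s (bieleckiWeight k t₀ s • U s)) := by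
  have hw := continuous_bieleckiWeight hf.locallyIntegrable t₀
  simp only [weightedPicard]
  rw [← smul_sub, add_sub_add_left_eq_sub]
  congr 1
  exact (intervalIntegral.integral_sub (hf.intervalIntegrable (hw.smul hV) _ _)
    (hf.intervalIntegrable (hw.smul hU) _ _)).symm

lemma norm_weightedPicard_sub_le (hf : IsCaratheodory f k) {t₀ : ℝ} {x : E} {V U : ℝ → E}
    (hV : Continuous V) (hU : Continuous U) {d : ℝ} (hd : 0 ≤ d) (hVU : ∀ s, ‖V s - U s‖ ≤ d)
    (t : ℝ) : ‖weightedPicard f k t₀ x V t - weightedPicard f k t₀ x U t‖ ≤ d / 2 := by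
  set w := bieleckiWeight k t₀
  have hw0 : ∀ s, 0 < w s := bieleckiWeight_pos k t₀
  have hpt : ∀ s ∈ uIcc t₀ t, ‖f s (w s • V s) - f s (w s • U s)‖ ≤ d * (k s * w s) := fun s _ =>
    calc ‖f s (w s • V s) - f s (w s • U s)‖ ≤ k s * ‖w s • V s - w s • U s‖ :=
          (hf.lipschitzWith s).norm_sub_le _ _
      _ = k s * w s * ‖V s - U s‖ := by
          rw [← smul_sub, norm_smul, Real.norm_of_nonneg (hw0 s).le, mul_assoc]
      _ ≤ k s * w s * d := mul_le_mul_of_nonneg_left (hVU s) (mul_nonneg (k s).2 (hw0 s).le)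
      _ = d * (k s * w s) := mul_comm _ _
  calc ‖weightedPicard f k t₀ x V t - weightedPicard f k t₀ x U t‖
      = (w t)⁻¹ * ‖∫ s in t₀..t, (f s (w s • V s) - f s (w s • U s))‖ := by
        rw [hf.weightedPicard_sub hV hU, norm_smul, Real.norm_of_nonneg (inv_nonneg.mpr (hw0 t).le)]
    _ ≤ (w t)⁻¹ * (d * (w t / 2)) := by
        gcongr
        · exact inv_nonneg.mpr (hw0 t).le
        · exact norm_integral_le_mul_bieleckiWeight hf.locallyIntegrable hd hpt
    _ = d / 2 := by
        field_simp [(hw0 t).ne']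

lemma norm_weightedPicard_zero_le (hf : IsCaratheodory f k) (t₀ : ℝ) (x : E) (t : ℝ) :
    ‖weightedPicard f k t₀ x 0 t‖ ≤ ‖x‖ + 1 := by
  have hint : ‖∫ s in t₀..t, f s 0‖ ≤ 1 * (bieleckiWeight k t₀ t / 2) :=
    norm_integral_le_mul_bieleckiWeight hf.locallyIntegrable zero_le_one fun s _ => by
      rw [one_mul]
      exact (hf.norm_zero_le s).trans
        (le_mul_of_one_le_right (k s).2 (one_le_bieleckiWeight k t₀ s))
  have hone := one_le_bieleckiWeight k t₀ t
  simp only [weightedPicard, Pi.zero_apply, smul_zero]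
  rw [norm_smul, Real.norm_of_nonneg (by positivity), inv_mul_le_iff₀ (by positivity)]
  calc ‖x + ∫ s in t₀..t, f s 0‖ ≤ ‖x‖ + bieleckiWeight k t₀ t / 2 :=
        (norm_add_le _ _).trans (by linarith)
    _ ≤ bieleckiWeight k t₀ t * (‖x‖ + 1) := by nlinarith [norm_nonneg x]

theorem exists_sol [CompleteSpace E] (hf : IsCaratheodory f k) (t₀ : ℝ) (x : E) :
    ∃ X, IsCaratheodorySol f X ∧ X t₀ = x := by
  let w := bieleckiWeight k t₀
  have hd := fun (V U : BoundedContinuousFunction ℝ E) => hf.norm_weightedPicard_sub_le (t₀ := t₀)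
    (x := x) V.continuous U.continuous (norm_nonneg (V - U)) (V - U).norm_coe_le_norm
  have hbound : ∀ (V : BoundedContinuousFunction ℝ E) t,
      ‖weightedPicard f k t₀ x V t‖ ≤ ‖V‖ / 2 + (‖x‖ + 1) := fun V t =>
    calc ‖weightedPicard f k t₀ x V t‖ ≤ _ + ‖weightedPicard f k t₀ x 0 t‖ :=
          norm_le_norm_sub_add _ _
      _ ≤ ‖V‖ / 2 + (‖x‖ + 1) :=
          add_le_add (by simpa using hd V 0 t) (hf.norm_weightedPicard_zero_le t₀ x t)
  let Ψ : BoundedContinuousFunction ℝ E → BoundedContinuousFunction ℝ E := fun V =>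
    BoundedContinuousFunction.ofNormedAddCommGroup _ (hf.continuous_weightedPicard V.continuous)
      _ (hbound V)
  have hcontr : ContractingWith (1 / 2) Ψ := by
    refine ⟨NNReal.half_lt_self one_ne_zero, LipschitzWith.of_dist_le_mul fun V U => ?_⟩
    rw [dist_eq_norm V U, BoundedContinuousFunction.dist_le (by positivity)]
    intro t
    rw [dist_eq_norm, NNReal.coe_div, NNReal.coe_one, NNReal.coe_ofNat, one_div_mul_eq_div]
    exact hd V U t
  obtain ⟨V, hV⟩ : ∃ V, Ψ V = V := ⟨_, hcontr.fixedPoint_isFixedPt⟩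
  have hwV : Continuous fun t => w t • V t :=
    (continuous_bieleckiWeight hf.locallyIntegrable t₀).smul V.continuous
  have hsol : ∀ t, w t • V t = x + ∫ s in t₀..t, f s (w s • V s) := fun t => by
    have hVt : V t = weightedPicard f k t₀ x V t := (DFunLike.congr_fun hV t).symm
    rw [hVt]
    exact smul_inv_smul₀ (bieleckiWeight_pos k t₀ t).ne' _
  refine ⟨fun t => w t • V t, ⟨hwV, fun s t => ?_⟩, by simp [hsol t₀]⟩
  rw [hsol s, hsol t, add_sub_add_left_eq_sub, intervalIntegral.integral_interval_sub_left
    (hf.intervalIntegrable hwV t₀ t) (hf.intervalIntegrable hwV t₀ s)]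

theorem exists_flow [CompleteSpace E] (hf : IsCaratheodory f k) (t₀ : ℝ) :
    ∃ Φ : E → ℝ → E, (∀ x, IsCaratheodorySol f (Φ x) ∧ Φ x t₀ = x) ∧
      ∀ t, Continuous fun x => Φ x t := by
  choose Φ hΦ using hf.exists_sol t₀
  refine ⟨Φ, hΦ, fun t => ?_⟩
  refine (LipschitzWith.of_dist_le' (K := 2 * bieleckiWeight k t₀ t)
    fun x y => ?_).continuous
  have h := hf.norm_sub_le (hΦ x).1 (hΦ y).1 t₀ t
  rw [(hΦ x).2, (hΦ y).2] at h
  simp only [dist_eq_norm]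
  linarith

end IsCaratheodory

end Caratheodory

section PhasePlane

variable {q G u v : ℝ → ℝ}

/-- Phase-plane form of `u'' + q(t) G(u) = 0`: `u' = v`, and `v' = -q(t) G(u)` in integral form. -/
structure IsPhaseSol (q G u v : ℝ → ℝ) : Prop where
  hasDerivAt : ∀ t, HasDerivAt u (v t) t
  continuous_snd : Continuous v
  sub_eq_integral : ∀ s t, v t - v s = -∫ r in s..t, q r * G (u r)

/-- The right-hand side of the first-order system satisfied by `(u, u')`. -/
def phaseField (q G : ℝ → ℝ) (t : ℝ) (z : ℝ × ℝ) : ℝ × ℝ :=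
  (z.2, -(q t * G z.1))

lemma isCaratheodory_phaseField (hq : LocallyIntegrable q volume) {L : ℝ≥0}
    (hG : LipschitzWith L G) (hG0 : G 0 = 0) :
    IsCaratheodory (phaseField q G) fun t => 1 + L * ‖q t‖₊ where
  locallyIntegrable := by
    simp only [NNReal.coe_add, NNReal.coe_one, NNReal.coe_mul, coe_nnnorm]
    have hnorm : LocallyIntegrable (fun t => ‖q t‖) volume := fun t => (hq t).norm
    exact (locallyIntegrable_const 1).add (hnorm.smul (L : ℝ))
  lipschitzWith t := LipschitzWith.of_dist_le_mul fun x y => by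
    have hfst : |G x.1 - G y.1| ≤ L * ‖x - y‖ := by
      simpa only [dist_eq_norm, Real.norm_eq_abs] using (hG.dist_le_mul x.1 y.1).trans
        (mul_le_mul_of_nonneg_left (norm_fst_le (x - y)) L.2)
    simp only [phaseField, dist_eq_norm, Prod.mk_sub_mk, NNReal.coe_add, NNReal.coe_one,
      NNReal.coe_mul, coe_nnnorm]
    refine norm_prod_le_iff.mpr ⟨(norm_snd_le (x - y)).trans ?_, ?_⟩
    · exact le_mul_of_one_le_left (norm_nonneg _) (le_add_of_nonneg_right (by positivity))
    · calc ‖-(q t * G x.1) - -(q t * G y.1)‖ = ‖q t‖ * |G x.1 - G y.1| := by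
            rw [neg_sub_neg, ← mul_sub, norm_mul, norm_sub_rev, Real.norm_eq_abs (G x.1 - _)]
        _ ≤ ‖q t‖ * (L * ‖x - y‖) := mul_le_mul_of_nonneg_left hfst (norm_nonneg _)
        _ ≤ (1 + L * ‖q t‖) * ‖x - y‖ := by nlinarith [norm_nonneg (x - y)]
  norm_zero_le t := by simpa [phaseField, hG0] using (1 + L * ‖q t‖₊).2
  aestronglyMeasurable X hX := by
    have hGX : Continuous fun s => G (X s).1 := hG.continuous.comp hX.fst
    exact hX.snd.aestronglyMeasurable.prodMk
      (hq.aestronglyMeasurable.mul hGX.aestronglyMeasurable).neg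

lemma intervalIntegrable_mul_comp (hq : LocallyIntegrable q volume) (hG : Continuous G)
    (hu : Continuous u) (a b : ℝ) : IntervalIntegrable (fun s => q s * G (u s)) volume a b :=
  (intervalIntegrable_of_locallyIntegrable hq a b).mul_continuousOn (hG.comp hu).continuousOn

namespace IsPhaseSol

lemma continuous_fst (h : IsPhaseSol q G u v) : Continuous u :=
  continuous_iff_continuousAt.mpr fun t => (h.hasDerivAt t).continuousAt

lemma deriv_eq (h : IsPhaseSol q G u v) : deriv u = v :=
  funext fun t => (h.hasDerivAt t).deriv

lemma comp_add_const (h : IsPhaseSol q G u v) {T : ℝ} (hq : Function.Periodic q T) :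
    IsPhaseSol q G (fun t => u (t + T)) (fun t => v (t + T)) where
  hasDerivAt t := (h.hasDerivAt (t + T)).comp_add_const t T
  continuous_snd := h.continuous_snd.comp (by fun_prop)
  sub_eq_integral s t := by
    rw [h.sub_eq_integral, ← intervalIntegral.integral_comp_add_right (fun r => q r * G (u r))]
    simp only [hq _]

protected lemma zero (hG0 : G 0 = 0) : IsPhaseSol q G (fun _ => 0) (fun _ => 0) where
  hasDerivAt t := hasDerivAt_const t 0
  continuous_snd := continuous_const
  sub_eq_integral s t := by simp [hG0]

end IsPhaseSol

lemma intervalIntegral_prodMk {E F : Type*} [NormedAddCommGroup E] [NormedAddCommGroup F]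
    [NormedSpace ℝ E] [NormedSpace ℝ F] [CompleteSpace E] [CompleteSpace F] {f : ℝ → E} {g : ℝ → F}
    {a b : ℝ} (hf : IntervalIntegrable f volume a b) (hg : IntervalIntegrable g volume a b) :
    ∫ t in a..b, (f t, g t) = (∫ t in a..b, f t, ∫ t in a..b, g t) := by
  simp only [intervalIntegral, integral_pair hf.1 hg.1, integral_pair hf.2 hg.2, Prod.mk_sub_mk]

lemma isCaratheodorySol_phaseField_iff (hq : LocallyIntegrable q volume) (hG : Continuous G) :
    IsCaratheodorySol (phaseField q G) (fun t => (u t, v t)) ↔ IsPhaseSol q G u v := by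
  have hpair : Continuous u → Continuous v → ∀ s t, ∫ r in s..t, phaseField q G r (u r, v r) =
      (∫ r in s..t, v r, -∫ r in s..t, q r * G (u r)) := fun hu hv s t => by
    rw [← intervalIntegral.integral_neg]
    exact intervalIntegral_prodMk (hv.intervalIntegrable s t)
      (intervalIntegrable_mul_comp hq hG hu s t).neg
  constructor
  · intro h
    have hu := h.continuous.fst
    have hv := h.continuous.snd
    refine ⟨fun t => ?_, hv, fun s t => ?_⟩
    · have huv : u = fun t => (∫ r in 0..t, v r) + u 0 := funext fun t => by
        rw [← sub_eq_iff_eq_add]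
        exact congrArg Prod.fst ((h.sub_eq_integral 0 t).trans (hpair hu hv 0 t))
      rw [huv]
      exact (hv.integral_hasStrictDerivAt 0 t).hasDerivAt.add_const (u 0)
    · exact congrArg Prod.snd ((h.sub_eq_integral s t).trans (hpair hu hv s t))
  · intro h
    refine ⟨h.continuous_fst.prodMk h.continuous_snd, fun s t => ?_⟩
    rw [hpair h.continuous_fst h.continuous_snd, intervalIntegral.integral_eq_sub_of_hasDerivAt
      (fun r _ => h.hasDerivAt r) (h.continuous_snd.intervalIntegrable s t), ← h.sub_eq_integral]
    rfl

theorem exists_phaseFlow (hq : LocallyIntegrable q volume) {L : ℝ≥0} (hG : LipschitzWith L G)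
    (hG0 : G 0 = 0) (t₀ : ℝ) : ∃ U V : ℝ × ℝ → ℝ → ℝ,
      (∀ z, IsPhaseSol q G (U z) (V z) ∧ U z t₀ = z.1 ∧ V z t₀ = z.2) ∧
      ∀ t, Continuous (fun z => U z t) ∧ Continuous fun z => V z t := by
  obtain ⟨Φ, hΦ, hΦc⟩ := (isCaratheodory_phaseField hq hG hG0).exists_flow t₀
  exact ⟨fun z t => (Φ z t).1, fun z t => (Φ z t).2,
    fun z => ⟨(isCaratheodorySol_phaseField_iff hq hG.continuous).mp (hΦ z).1,
      congrArg Prod.fst (hΦ z).2, congrArg Prod.snd (hΦ z).2⟩,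
    fun t => ⟨(hΦc t).fst, (hΦc t).snd⟩⟩

namespace IsPhaseSol

theorem eq_of_eq (hq : LocallyIntegrable q volume) {L : ℝ≥0} (hG : LipschitzWith L G)
    (hG0 : G 0 = 0) {u₁ v₁ u₂ v₂ : ℝ → ℝ} (h₁ : IsPhaseSol q G u₁ v₁) (h₂ : IsPhaseSol q G u₂ v₂)
    {s : ℝ} (hu : u₁ s = u₂ s) (hv : v₁ s = v₂ s) : u₁ = u₂ ∧ v₁ = v₂ := by
  have h := (isCaratheodory_phaseField hq hG hG0).eq_of_eq
    ((isCaratheodorySol_phaseField_iff hq hG.continuous).mpr h₁)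
    ((isCaratheodorySol_phaseField_iff hq hG.continuous).mpr h₂) (s := s) (Prod.ext hu hv)
  exact ⟨funext fun t => congrArg Prod.fst (congrFun h t),
    funext fun t => congrArg Prod.snd (congrFun h t)⟩

theorem periodic (hq : LocallyIntegrable q volume) {L : ℝ≥0} (hG : LipschitzWith L G)
    (hG0 : G 0 = 0) {T : ℝ} (hqT : Function.Periodic q T) (h : IsPhaseSol q G u v) (hu : u T = u 0)
    (hv : v T = v 0) : Function.Periodic u T :=
  congrFun (eq_of_eq hq hG hG0 (h.comp_add_const hqT) h (s := 0) (by simpa using hu)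
    (by simpa using hv)).1

theorem exists_norm_le (hq : LocallyIntegrable q volume) {L : ℝ≥0} (hG : LipschitzWith L G)
    (hG0 : G 0 = 0) (T : ℝ) : ∃ Γ : ℝ, 0 < Γ ∧ ∀ u v, IsPhaseSol q G u v → ∀ t ∈ Icc 0 T,
      ‖(u t, v t)‖ ≤ Γ * ‖(u 0, v 0)‖ := by
  have hf := isCaratheodory_phaseField hq hG hG0
  obtain ⟨B, hB⟩ := isCompact_Icc.bddAbove_image (K := Icc 0 T)
    (continuous_bieleckiWeight hf.locallyIntegrable 0).continuousOn
  refine ⟨2 * max 1 B, by positivity, fun u v h t ht => ?_⟩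
  have hzero := hf.norm_sub_le ((isCaratheodorySol_phaseField_iff hq hG.continuous).mpr h)
    ((isCaratheodorySol_phaseField_iff hq hG.continuous).mpr (.zero hG0)) 0 t
  simp only [Prod.mk_zero_zero, sub_zero] at hzero
  calc ‖(u t, v t)‖ ≤ 2 * ‖(u 0, v 0)‖ * bieleckiWeight _ 0 t := hzero
    _ ≤ 2 * ‖(u 0, v 0)‖ * max 1 B := by
        gcongr
        exact (hB (mem_image_of_mem _ ht)).trans (le_max_right 1 B)
    _ = 2 * max 1 B * ‖(u 0, v 0)‖ := by ring

lemma mul_sub_le_sub (h : IsPhaseSol q G u v) {s t c : ℝ} (hst : s ≤ t)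
    (hc : ∀ r ∈ Icc s t, c ≤ v r) : c * (t - s) ≤ u t - u s :=
  (convex_Icc s t).mul_sub_le_image_sub_of_le_deriv h.continuous_fst.continuousOn
    (fun r _ => (h.hasDerivAt r).differentiableAt.differentiableWithinAt)
    (fun r hr => h.deriv_eq ▸ hc r (interior_subset hr)) s (left_mem_Icc.mpr hst) t
    (right_mem_Icc.mpr hst) hst

lemma sub_le_mul_sub (h : IsPhaseSol q G u v) {s t c : ℝ} (hst : s ≤ t)
    (hc : ∀ r ∈ Icc s t, v r ≤ c) : u t - u s ≤ c * (t - s) :=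
  (convex_Icc s t).image_sub_le_mul_sub_of_deriv_le h.continuous_fst.continuousOn
    (fun r _ => (h.hasDerivAt r).differentiableAt.differentiableWithinAt)
    (fun r hr => h.deriv_eq ▸ hc r (interior_subset hr)) s (left_mem_Icc.mpr hst) t
    (right_mem_Icc.mpr hst) hst

lemma antitoneOn_snd (h : IsPhaseSol q G u v) (hG : ∀ s, 0 ≤ G s) {α β : ℝ}
    (hq : ∀ᵐ t ∂volume.restrict (Icc α β), 0 ≤ q t) : AntitoneOn v (Icc α β) := by
  intro s hs t ht hst
  rw [← sub_nonpos, h.sub_eq_integral, neg_nonpos]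
  exact intervalIntegral.integral_nonneg_of_ae_restrict hst <|
    ae_restrict_of_ae_restrict_of_subset (Icc_subset_Icc hs.1 ht.2) <|
      hq.mono fun r hr => mul_nonneg hr (hG _)

lemma concaveOn (h : IsPhaseSol q G u v) (hG : ∀ s, 0 ≤ G s) {α β : ℝ}
    (hq : ∀ᵐ t ∂volume.restrict (Icc α β), 0 ≤ q t) : ConcaveOn ℝ (Icc α β) u :=
  AntitoneOn.concaveOn_of_deriv (convex_Icc α β) h.continuous_fst.continuousOn
    (fun t _ => (h.hasDerivAt t).differentiableAt.differentiableWithinAt)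
    (h.deriv_eq ▸ (h.antitoneOn_snd hG hq).mono interior_subset)

lemma neg (h : IsPhaseSol q G u v) :
    IsPhaseSol (fun t => -q t) (fun s => G (-s)) (fun t => -u t) (fun t => -v t) where
  hasDerivAt t := (h.hasDerivAt t).neg
  continuous_snd := h.continuous_snd.neg
  sub_eq_integral s t := by
    simp only [neg_neg, neg_mul, intervalIntegral.integral_neg]
    linarith [h.sub_eq_integral s t]

lemma convexOn (h : IsPhaseSol q G u v) (hG : ∀ s, 0 ≤ G s) {α β : ℝ}
    (hq : ∀ᵐ t ∂volume.restrict (Icc α β), q t ≤ 0) : ConvexOn ℝ (Icc α β) u :=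
  neg_concaveOn_iff.mp (h.neg.concaveOn (fun _ => hG _) (hq.mono fun _ => neg_nonneg.mpr))

end IsPhaseSol

end PhasePlane

section AprioriBound

variable {q : ℝ → ℝ} {α β : ℝ}

lemma abs_sub_mul_le_of_concaveOn {f : ℝ → ℝ} {S : Set ℝ} (hf : ConcaveOn ℝ S f) {x y t : ℝ}
    (hx : x ∈ S) (hy : y ∈ S) (hfx : 0 ≤ f x) (ht : t ∈ uIcc x y) :
    |t - x| * f y ≤ |y - x| * f t := by
  rw [← segment_eq_uIcc] at ht
  obtain ⟨a, b, ha, hb, hab, rfl⟩ := ht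
  have hconcave : b * f y ≤ f (a • x + b • y) := by
    have h := hf.2 hx hy ha hb hab
    simp only [smul_eq_mul] at h ⊢
    nlinarith [mul_nonneg ha hfx]
  have hdist : a • x + b • y - x = b * (y - x) := by
    simp only [smul_eq_mul]
    linear_combination x * hab
  calc |a • x + b • y - x| * f y = |y - x| * (b * f y) := by
        rw [hdist, abs_mul, abs_of_nonneg hb]
        ring
    _ ≤ |y - x| * f (a • x + b • y) := mul_le_mul_of_nonneg_left hconcave (abs_nonneg _)

theorem mul_le_mul_of_concaveOn_Icc {f : ℝ → ℝ} (hf : ConcaveOn ℝ (Icc α β) f)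
    (hf0 : ∀ t ∈ Icc α β, 0 ≤ f t) {h s t : ℝ} (hh : 0 ≤ h) (hs : s ∈ Icc α β)
    (ht : t ∈ Icc (α + h) (β - h)) : h * f s ≤ (β - α) * f t := by
  have hαβ : α ≤ β := hs.1.trans hs.2
  have htI : t ∈ Icc α β := ⟨by linarith [ht.1], by linarith [ht.2]⟩
  suffices hend : ∃ x ∈ Icc α β, t ∈ uIcc x s ∧ h ≤ |t - x| ∧ |s - x| ≤ β - α by
    obtain ⟨x, hx, htx, hhx, hsx⟩ := hend
    calc h * f s ≤ |t - x| * f s := mul_le_mul_of_nonneg_right hhx (hf0 s hs)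
      _ ≤ |s - x| * f t := abs_sub_mul_le_of_concaveOn hf hx hs (hf0 x hx) htx
      _ ≤ (β - α) * f t := mul_le_mul_of_nonneg_right hsx (hf0 t htI)
  rcases le_total t s with hts | hst
  · exact ⟨α, left_mem_Icc.mpr hαβ, mem_uIcc_of_le htI.1 hts,
      (by linarith [ht.1] : h ≤ t - α).trans (le_abs_self _),
      by rw [abs_of_nonneg (sub_nonneg.mpr hs.1)]; linarith [hs.2]⟩
  · exact ⟨β, right_mem_Icc.mpr hαβ, mem_uIcc_of_ge hst htI.2,
      (by linarith [ht.2] : h ≤ -(t - β)).trans (neg_le_abs _),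
      by rw [abs_of_nonpos (sub_nonpos.mpr hs.2)]; linarith [hs.1]⟩

namespace PosOn

lemma integral_pos (hq : LocallyIntegrable q volume) (h : PosOn q (Icc α β)) (hαβ : α ≤ β) :
    0 < ∫ t in α..β, q t := by
  rw [intervalIntegral.integral_of_le hαβ, ← integral_Icc_eq_integral_Ioc]
  exact (integral_nonneg_of_ae h.1).lt_of_ne fun hzero => h.2 <|
    (integral_eq_zero_iff_of_nonneg_ae h.1 (hq.integrableOn_isCompact isCompact_Icc)).mp hzero.symm

lemma lt (h : PosOn q (Icc α β)) : α < β := by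
  by_contra! hβα
  refine h.2 ?_
  have hnull : volume (Icc α β) = 0 := by
    rw [Real.volume_Icc, ENNReal.ofReal_eq_zero]
    linarith
  rw [Measure.restrict_eq_zero.mpr hnull]
  exact ae_zero.le (by simp)

lemma exists_integral_pos (hq : LocallyIntegrable q volume) (h : PosOn q (Icc α β)) :
    ∃ d > 0, α + d ≤ β - d ∧ 0 < ∫ t in (α + d)..(β - d), q t := by
  have hαβ := h.lt
  have hprim := continuous_integral_of_locallyIntegrable hq α
  have hcont : Continuous fun d => ∫ t in (α + d)..(β - d), q t := by
    have hsub : Continuous fun d => (∫ t in α..(β - d), q t) - ∫ t in α..(α + d), q t :=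
      (hprim.comp (continuous_sub_left β)).sub (hprim.comp (continuous_const_add α))
    simpa only [intervalIntegral.integral_interval_sub_left
      (intervalIntegrable_of_locallyIntegrable hq _ _)
      (intervalIntegrable_of_locallyIntegrable hq _ _)] using hsub
  have hpos : ∀ᶠ d in nhds 0, 0 < ∫ t in (α + d)..(β - d), q t :=
    hcont.continuousAt.eventually (lt_mem_nhds (by simpa using h.integral_pos hq hαβ.le))
  obtain ⟨d, hd, hd0, hdβ⟩ := ((hpos.filter_mono nhdsWithin_le_nhds).and
    (Ioo_mem_nhdsGT (show (0 : ℝ) < (β - α) / 2 by linarith))).exists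
  exact ⟨d, hd0, by linarith, hd⟩

end PosOn

/-- A priori bound on `I`: if `G` grows at least like `K s` beyond `M`, then solutions of
`u'' + q(t) G(u) = 0` that are nonnegative on `I` are smaller than `C * M` there. -/
def AprioriBoundOn (q : ℝ → ℝ) (I : Set ℝ) (K C : ℝ) : Prop :=
  ∀ ⦃G u v : ℝ → ℝ⦄ ⦃M : ℝ⦄, Continuous G → (∀ s, 0 ≤ G s) → 0 < M → (∀ s ≥ M, K * s ≤ G s) →
    IsPhaseSol q G u v → (∀ t ∈ I, 0 ≤ u t) → ∀ t ∈ I, u t < C * M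

lemma AprioriBoundOn.mono {I : Set ℝ} {K C K' C' : ℝ} (h : AprioriBoundOn q I K C) (hK : K ≤ K')
    (hC : C ≤ C') : AprioriBoundOn q I K' C' := fun _ _ _ _ hGc hG hM hGK hs hu t ht =>
  (h hGc hG hM (fun s hs => (mul_le_mul_of_nonneg_right hK (hM.le.trans hs)).trans (hGK s hs))
    hs hu t ht).trans_le (mul_le_mul_of_nonneg_right hC hM.le)

lemma IsPhaseSol.mul_snd_sub_snd_le {G u v : ℝ → ℝ} (h : IsPhaseSol q G u v)
    (hv : AntitoneOn v (Icc α β)) {S d : ℝ} (hu : ∀ t ∈ Icc α β, u t ∈ Icc 0 S) (hd : 0 ≤ d)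
    (hdβ : α + d ≤ β - d) : d * (v (α + d) - v (β - d)) ≤ 2 * S := by
  have hleft : v (α + d) * (α + d - α) ≤ u (α + d) - u α :=
    h.mul_sub_le_sub (by linarith) fun r hr =>
      hv ⟨hr.1, by linarith [hr.2]⟩ ⟨by linarith, by linarith⟩ hr.2
  have hright : u β - u (β - d) ≤ v (β - d) * (β - (β - d)) :=
    h.sub_le_mul_sub (by linarith) fun r hr =>
      hv ⟨by linarith, by linarith⟩ ⟨by linarith [hr.1], hr.2⟩ hr.1
  have huα := (hu α ⟨le_rfl, by linarith⟩).1
  have huβ := (hu β ⟨by linarith, le_rfl⟩).1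
  have hu₁ := (hu (α + d) ⟨by linarith, by linarith⟩).2
  have hu₂ := (hu (β - d) ⟨by linarith, by linarith⟩).2
  nlinarith

-- At a maximum `S` that is too large, concavity makes `G (u)` at least `3 S / (d * ∫ q)` on the
-- middle interval, so `u'` drops there by more than the `2 S / d` that concavity allows.
theorem exists_aprioriBoundOn_Icc (hq : LocallyIntegrable q volume) (h : PosOn q (Icc α β)) :
    ∃ K C, AprioriBoundOn q (Icc α β) K C := by
  have hαβ : 0 < β - α := sub_pos.mpr h.lt
  obtain ⟨d, hd, hdβ, hI⟩ := h.exists_integral_pos hq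
  set I := ∫ t in (α + d)..(β - d), q t
  refine ⟨3 * (β - α) / (d ^ 2 * I), (β - α) / d, fun G u v M hGc hG hM hGK hsol hu => ?_⟩
  obtain ⟨τ, hτ, hmax⟩ := isCompact_Icc.exists_isMaxOn (nonempty_Icc.mpr h.lt.le)
    hsol.continuous_fst.continuousOn
  suffices hτM : u τ < (β - α) / d * M from fun t ht => (hmax ht).trans_lt hτM
  by_contra! hlarge
  rw [div_mul_eq_mul_div, div_le_iff₀ hd] at hlarge
  have hGu : ∀ t ∈ Icc (α + d) (β - d), 3 * u τ / (d * I) ≤ G (u t) := fun t ht => by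
    have hut := mul_le_mul_of_concaveOn_Icc (hsol.concaveOn hG h.1) hu hd.le hτ ht
    have hMt : M ≤ u t := le_of_mul_le_mul_left (by linarith) hαβ
    refine le_trans ?_ (hGK (u t) hMt)
    calc 3 * u τ / (d * I) = 3 / (d ^ 2 * I) * (d * u τ) := by field_simp
      _ ≤ 3 / (d ^ 2 * I) * ((β - α) * u t) := by gcongr
      _ = 3 * (β - α) / (d ^ 2 * I) * u t := by ring
  have hdrop : 3 * u τ / d ≤ v (α + d) - v (β - d) := by
    calc 3 * u τ / d = ∫ t in (α + d)..(β - d), q t * (3 * u τ / (d * I)) := by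
          rw [intervalIntegral.integral_mul_const, show ∫ t in (α + d)..(β - d), q t = I from rfl]
          field_simp
      _ ≤ ∫ t in (α + d)..(β - d), q t * G (u t) := by
          refine intervalIntegral.integral_mono_ae_restrict hdβ
            ((intervalIntegrable_of_locallyIntegrable hq _ _).mul_const _)
            (intervalIntegrable_mul_comp hq hGc hsol.continuous_fst _ _) ?_
          filter_upwards [ae_restrict_of_ae_restrict_of_subset
            (Icc_subset_Icc (by linarith) (by linarith)) h.1,
            ae_restrict_mem measurableSet_Icc] with t hqt ht
          exact mul_le_mul_of_nonneg_left (hGu t ht) hqt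
      _ = v (α + d) - v (β - d) := by linarith [hsol.sub_eq_integral (α + d) (β - d)]
  have hle := hsol.mul_snd_sub_snd_le (hsol.antitoneOn_snd hG h.1)
    (fun t ht => ⟨hu t ht, hmax ht⟩) hd.le hdβ
  rw [div_le_iff₀' hd] at hdrop
  nlinarith

/-- Points `0 = σ 0 ≤ ⋯ ≤ σ (2 m) = T` such that `q ≻ 0` on the even intervals and `q ≤ 0` on the
odd ones, as in `(q*)` but with `q` allowed to vanish on odd intervals. -/
structure IsSignPartition (q : ℝ → ℝ) (T : ℝ) (m : ℕ) (σ : ℕ → ℝ) : Prop where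
  zero : σ 0 = 0
  last : σ (2 * m) = T
  le_succ : ∀ i < 2 * m, σ i ≤ σ (i + 1)
  posOn : ∀ i < m, PosOn q (Icc (σ (2 * i)) (σ (2 * i + 1)))
  nonpos : ∀ i < m, ∀ᵐ t ∂volume.restrict (Icc (σ (2 * i + 1)) (σ (2 * i + 2))), q t ≤ 0

lemma exists_mem_Icc_succ {σ : ℕ → ℝ} {t : ℝ} {n : ℕ} (h0 : σ 0 ≤ t) (hn : t ≤ σ (n + 1)) :
    ∃ i ≤ n, t ∈ Icc (σ i) (σ (i + 1)) := by
  induction n with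
  | zero => exact ⟨0, le_rfl, h0, hn⟩
  | succ n ih =>
    rcases le_total t (σ (n + 1)) with ht | ht
    · obtain ⟨i, hi, hti⟩ := ih ht
      exact ⟨i, hi.trans n.le_succ, hti⟩
    · exact ⟨n + 1, le_rfl, ht, hn⟩

namespace IsSignPartition

variable {T : ℝ} {m : ℕ} {σ : ℕ → ℝ}

lemma le_of_le (h : IsSignPartition q T m σ) {i j : ℕ} (hij : i ≤ j) (hj : j ≤ 2 * m) :
    σ i ≤ σ j := by
  induction j, hij using Nat.le_induction with
  | base => exact le_rfl
  | succ j _ ih => exact (ih (by omega)).trans (h.le_succ j (by omega))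

lemma Icc_subset (h : IsSignPartition q T m σ) {i : ℕ} (hi : i < 2 * m) :
    Icc (σ i) (σ (i + 1)) ⊆ Icc 0 T :=
  Icc_subset_Icc (h.zero ▸ h.le_of_le i.zero_le hi.le) (h.last ▸ h.le_of_le hi le_rfl)

lemma zero_lt (h : IsSignPartition q T m σ) (hT : 0 < T) : 0 < m := by
  by_contra! hm
  obtain rfl : m = 0 := by omega
  exact hT.ne (h.zero.symm.trans h.last)

-- On the odd intervals `u` is convex, hence below its values at the endpoints, which belong to
-- even intervals; the endpoint `T` does so through `u T = u 0`.
theorem lt_of_forall_even_lt (h : IsSignPartition q T m σ) (hT : 0 < T) {G u v : ℝ → ℝ}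
    (hs : IsPhaseSol q G u v) (hG : ∀ s, 0 ≤ G s) (huT : u T = u 0) {B : ℝ}
    (heven : ∀ i < m, ∀ t ∈ Icc (σ (2 * i)) (σ (2 * i + 1)), u t < B) : ∀ t ∈ Icc 0 T, u t < B := by
  have hm := h.zero_lt hT
  have hle : ∀ i ≤ m, u (σ (2 * i)) < B := fun i hi => by
    rcases hi.lt_or_eq with hi | rfl
    · exact heven i hi _ (left_mem_Icc.mpr (h.le_succ _ (by omega)))
    · rw [h.last, huT, ← h.zero]
      exact heven 0 hm _ (left_mem_Icc.mpr (h.le_succ 0 (by omega)))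
  intro t ht
  obtain ⟨i, hi, hti⟩ : ∃ i ≤ 2 * m - 1, t ∈ Icc (σ i) (σ (i + 1)) :=
    exists_mem_Icc_succ (h.zero.trans_le ht.1)
      (ht.2.trans (by rw [Nat.sub_add_cancel (by omega), h.last]))
  obtain ⟨j, rfl | rfl⟩ := i.even_or_odd'
  · exact heven j (by omega) t hti
  · refine ((hs.convexOn hG (h.nonpos j (by omega))).le_max_of_mem_Icc
      (left_mem_Icc.mpr (hti.1.trans hti.2)) (right_mem_Icc.mpr (hti.1.trans hti.2)) hti).trans_lt
      (max_lt ?_ (hle (j + 1) (by omega)))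
    exact heven j (by omega) _ (right_mem_Icc.mpr (h.le_succ _ (by omega)))

theorem exists_aprioriBoundOn (h : IsSignPartition q T m σ) (hq : LocallyIntegrable q volume) :
    ∃ K C, ∀ i < m, AprioriBoundOn q (Icc (σ (2 * i)) (σ (2 * i + 1))) K C := by
  have hex : ∀ i : Fin m, ∃ K C, AprioriBoundOn q (Icc (σ (2 * i)) (σ (2 * i + 1))) K C :=
    fun i => exists_aprioriBoundOn_Icc hq (h.posOn i i.2)
  choose K C hKC using hex
  obtain ⟨K', hK'⟩ := (finite_range K).bddAbove
  obtain ⟨C', hC'⟩ := (finite_range C).bddAbove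
  exact ⟨K', C', fun i hi =>
    (hKC ⟨i, hi⟩).mono (hK' (mem_range_self _)) (hC' (mem_range_self _))⟩

end IsSignPartition

end AprioriBound

section Positivity

variable {q G u v : ℝ → ℝ} {L : ℝ≥0} {T : ℝ}

namespace IsPhaseSol

lemma abs_snd_sub_le (h : IsPhaseSol q G u v) (hq : LocallyIntegrable q volume) {a b s t C : ℝ}
    (hC : ∀ r ∈ Icc a b, |G (u r)| ≤ C) (hs : s ∈ Icc a b) (ht : t ∈ Icc a b) :
    |v t - v s| ≤ C * ∫ r in a..b, |q r| := by
  wlog hst : s ≤ t generalizing s t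
  · rw [abs_sub_comm]
    exact this ht hs (le_of_not_ge hst)
  have hqabs := fun a b => (intervalIntegrable_of_locallyIntegrable hq a b).abs
  calc |v t - v s| = ‖∫ r in s..t, q r * G (u r)‖ := by
        rw [h.sub_eq_integral, abs_neg, Real.norm_eq_abs]
    _ ≤ ∫ r in s..t, C * |q r| :=
        intervalIntegral.norm_integral_le_of_norm_le hst
          (Eventually.of_forall fun r hr => by
            rw [norm_mul, mul_comm]
            exact mul_le_mul_of_nonneg_right (hC r ⟨hs.1.trans hr.1.le, hr.2.trans ht.2⟩)
              (abs_nonneg _)) ((hqabs s t).const_mul C)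
    _ = C * ∫ r in s..t, |q r| := intervalIntegral.integral_const_mul _ _
    _ ≤ C * ∫ r in a..b, |q r| :=
        mul_le_mul_of_nonneg_left (intervalIntegral.integral_mono_interval hs.1 hst ht.2
          (Eventually.of_forall fun _ => abs_nonneg _) (hqabs a b)) ((abs_nonneg _).trans (hC s hs))

lemma snd_le_abs_integral (h : IsPhaseSol q G u v) (hq : LocallyIntegrable q volume)
    (hG : LipschitzWith L G) (hG0 : ∀ s ≤ 0, G s = 0) {t₀ s : ℝ} (hv : v t₀ ≤ 0) :
    v s ≤ |∫ r in t₀..s, L * ‖q r‖ * max (u r) 0| := by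
  have hGu : ∀ x, |G x| ≤ L * max x 0 := fun x => by
    have hx : G x = G (max x 0) := by
      rcases le_total x 0 with hx | hx
      · rw [max_eq_right hx, hG0 x hx, hG0 0 le_rfl]
      · rw [max_eq_left hx]
    simpa [hx, hG0 0 le_rfl, Real.dist_eq, abs_of_nonneg (le_max_right x 0)]
      using hG.dist_le_mul (max x 0) 0
  have hint : IntervalIntegrable (fun r => L * ‖q r‖ * max (u r) 0) volume t₀ s :=
    ((intervalIntegrable_of_locallyIntegrable hq t₀ s).norm.const_mul _).mul_continuousOn
      (h.continuous_fst.max continuous_const).continuousOn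
  calc v s ≤ v s - v t₀ := by linarith
    _ ≤ ‖∫ r in t₀..s, q r * G (u r)‖ := by
        rw [h.sub_eq_integral]
        exact neg_le_abs _
    _ ≤ _ := intervalIntegral.norm_integral_le_abs_of_norm_le
        (Eventually.of_forall fun r => by
          rw [norm_mul, mul_comm (L : ℝ), mul_assoc]
          exact mul_le_mul_of_nonneg_left (hGu (u r)) (norm_nonneg _)) hint

-- Gronwall for the positive part `max (max u v) 0`, which vanishes at `t₀`.
theorem nonpos_of_nonpos (h : IsPhaseSol q G u v) (hq : LocallyIntegrable q volume)
    (hG : LipschitzWith L G) (hG0 : ∀ s ≤ 0, G s = 0) {t₀ t : ℝ} (hu : u t₀ ≤ 0) (hv : v t₀ ≤ 0)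
    (ht : t₀ ≤ t) : u t ≤ 0 ∧ v t ≤ 0 := by
  have huc := h.continuous_fst
  have hvc := h.continuous_snd
  set φ : ℝ → ℝ := fun s => max (max (u s) (v s)) 0
  have hφ : Continuous φ := (huc.max hvc).max continuous_const
  have hφ0 : ∀ s, 0 ≤ φ s := fun s => le_max_right _ _
  have hk := (isCaratheodory_phaseField hq hG (hG0 0 le_rfl)).locallyIntegrable
  have hint : ∀ s, IntervalIntegrable (fun r => (1 + L * ‖q r‖) * φ r) volume t₀ s := fun s => by
    simpa using (intervalIntegrable_of_locallyIntegrable hk t₀ s).mul_continuousOn hφ.continuousOn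
  have hmono : ∀ s ∈ uIcc t₀ t, ∀ ψ : ℝ → ℝ, (∀ r, 0 ≤ ψ r) →
      (∀ r, ψ r ≤ (1 + L * ‖q r‖) * φ r) →
      |∫ r in t₀..s, ψ r| ≤ |∫ r in t₀..s, (1 + L * ‖q r‖) * φ r| := fun s _ ψ hψ0 hψ =>
    intervalIntegral.norm_integral_le_abs_of_norm_le
      (Eventually.of_forall fun r => by rw [Real.norm_of_nonneg (hψ0 r)]; exact hψ r) (hint s)
  have hgronwall : φ t ≤ 2 * 0 * bieleckiWeight (fun r => 1 + L * ‖q r‖₊) t₀ t := by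
    refine le_mul_bieleckiWeight_of_le_add_abs_integral hk hφ hφ0 fun s hs => ?_
    simp only [NNReal.coe_add, NNReal.coe_one, NNReal.coe_mul, coe_nnnorm, zero_add]
    refine max_le (max_le ?_ ?_) (abs_nonneg _)
    · calc u s ≤ ∫ r in t₀..s, v r := by
            rw [intervalIntegral.integral_eq_sub_of_hasDerivAt (fun r _ => h.hasDerivAt r)
              (hvc.intervalIntegrable _ _)]
            linarith
        _ ≤ ∫ r in t₀..s, φ r := by
            rw [uIcc_of_le ht] at hs
            exact intervalIntegral.integral_mono_on hs.1 (hvc.intervalIntegrable _ _)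
              (hφ.intervalIntegrable _ _) fun r _ => (le_max_right _ _).trans (le_max_left _ _)
        _ ≤ |∫ r in t₀..s, φ r| := le_abs_self _
        _ ≤ _ := hmono s hs φ hφ0 fun r =>
            le_mul_of_one_le_left (hφ0 r) (le_add_of_nonneg_right (by positivity))
    · refine (h.snd_le_abs_integral hq hG hG0 hv).trans (hmono s hs _ (fun r => by positivity) ?_)
      intro r
      exact mul_le_mul (le_add_of_nonneg_left zero_le_one)
        (max_le_max_right 0 (le_max_left _ _)) (le_max_right _ _) (by positivity)
  rw [mul_zero, zero_mul] at hgronwall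
  have hmax : max (u t) (v t) ≤ 0 := (le_max_left _ _).trans hgronwall
  exact ⟨(le_max_left _ _).trans hmax, (le_max_right _ _).trans hmax⟩

theorem pos_of_pos (h : IsPhaseSol q G u v) (hq : LocallyIntegrable q volume)
    (hG : LipschitzWith L G) (hG0 : ∀ s ≤ 0, G s = 0) (hu0 : 0 < u 0) (huT : 0 < u T) :
    ∀ t ∈ Icc 0 T, 0 < u t := by
  intro t ht
  obtain ⟨τ, hτ, hmin⟩ :=
    isCompact_Icc.exists_isMinOn ⟨t, ht⟩ h.continuous_fst.continuousOn
  refine lt_of_lt_of_le ?_ (hmin ht)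
  by_contra! hle
  have hτ0 : 0 < τ := hτ.1.lt_of_ne (by rintro rfl; exact hle.not_gt hu0)
  have hτT : τ < T := hτ.2.lt_of_ne (by rintro rfl; exact hle.not_gt huT)
  have hv : v τ = 0 := (hmin.isLocalMin (Icc_mem_nhds hτ0 hτT)).hasDerivAt_eq_zero (h.hasDerivAt τ)
  exact huT.not_ge (h.nonpos_of_nonpos hq hG hG0 hle hv.le hτ.2).1

end IsPhaseSol

end Positivity

section SmallSolutions

variable {q G u v : ℝ → ℝ} {T r : ℝ} {η : ℝ≥0}

namespace IsPhaseSol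

lemma abs_snd_le_of_eq (h : IsPhaseSol q G u v) (hq : LocallyIntegrable q volume) (hT : 0 < T)
    (huT : u T = u 0) {C t : ℝ} (hC : ∀ s ∈ Icc 0 T, |G (u s)| ≤ C) (ht : t ∈ Icc 0 T) :
    |v t| ≤ C * ∫ s in 0..T, |q s| := by
  obtain ⟨ξ, hξ, hvξ⟩ := exists_hasDerivAt_eq_zero hT h.continuous_fst.continuousOn huT.symm
    fun s _ => h.hasDerivAt s
  simpa [hvξ] using h.abs_snd_sub_le hq hC (Ioo_subset_Icc_self hξ) ht

lemma abs_fst_sub_le (h : IsPhaseSol q G u v) {B s t : ℝ} (hv : ∀ r ∈ Icc 0 T, |v r| ≤ B)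
    (hs : s ∈ Icc 0 T) (ht : t ∈ Icc 0 T) : |u t - u s| ≤ B * T := by
  have hB : 0 ≤ B := (abs_nonneg _).trans (hv s hs)
  calc |u t - u s| ≤ B * |t - s| :=
        (convex_Icc 0 T).norm_image_sub_le_of_norm_hasDerivWithin_le
          (fun r _ => (h.hasDerivAt r).hasDerivWithinAt) hv hs ht
    _ ≤ B * T := mul_le_mul_of_nonneg_left
        (by simpa using abs_sub_le_of_le_of_le ht.1 ht.2 hs.1 hs.2) hB

-- `G (u)` oscillates by at most `η T Q g` around its maximum `g`, where `Q = ∫ |q|`; hence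
-- `v T - v 0 = -∫ q G (u)` is at least `g (-∫ q - η T Q ^ 2)`.
theorem snd_lt_snd_of_small (h : IsPhaseSol q G u v) (hq : LocallyIntegrable q volume)
    (hT : 0 < T) (hG : Continuous G) (hGη : LipschitzOnWith η G (Icc 0 r))
    (hGpos : ∀ s > 0, 0 < G s) (hη : η * T * (∫ s in 0..T, |q s|) ^ 2 < -∫ s in 0..T, q s)
    (hu : ∀ t ∈ Icc 0 T, u t ∈ Ioc 0 r) (huT : u T = u 0) : v 0 < v T := by
  set Q := ∫ s in 0..T, |q s|
  obtain ⟨τ, hτ, hmax⟩ := isCompact_Icc.exists_isMaxOn (nonempty_Icc.mpr hT.le)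
    (hG.comp h.continuous_fst).continuousOn
  set g := G (u τ)
  have hg : 0 < g := hGpos _ (hu τ hτ).1
  have hGabs : ∀ t ∈ Icc 0 T, |G (u t)| ≤ g := fun t ht =>
    (abs_of_pos (hGpos _ (hu t ht).1)).trans_le (hmax ht)
  have hosc : ∀ t ∈ Icc 0 T, |G (u t) - g| ≤ η * (g * Q * T) := fun t ht =>
    (hGη.dist_le_mul _ (Ioc_subset_Icc_self (hu t ht)) _ (Ioc_subset_Icc_self (hu τ hτ))).trans <|
      mul_le_mul_of_nonneg_left
        (h.abs_fst_sub_le (fun s hs => h.abs_snd_le_of_eq hq hT huT hGabs hs) hτ ht) η.2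
  have hqi := intervalIntegrable_of_locallyIntegrable hq 0 T
  have hqG := intervalIntegrable_mul_comp hq hG h.continuous_fst 0 T
  have herror : |∫ t in 0..T, q t * (G (u t) - g)| ≤ η * (g * Q * T) * Q := by
    rw [← intervalIntegral.integral_const_mul, ← Real.norm_eq_abs]
    refine intervalIntegral.norm_integral_le_of_norm_le hT.le (Eventually.of_forall fun t ht => ?_)
      (hqi.abs.const_mul _)
    rw [norm_mul, mul_comm]
    exact mul_le_mul_of_nonneg_right (hosc t (Ioc_subset_Icc_self ht)) (abs_nonneg _)
  have hincrement : v T - v 0 = g * (-∫ t in 0..T, q t) - ∫ t in 0..T, q t * (G (u t) - g) := by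
    simp only [mul_sub]
    rw [h.sub_eq_integral, intervalIntegral.integral_sub hqG (hqi.mul_const g),
      intervalIntegral.integral_mul_const]
    ring
  nlinarith [le_abs_self (∫ t in 0..T, q t * (G (u t) - g))]

end IsPhaseSol

end SmallSolutions

section PeriodicSolution

variable {q G : ℝ → ℝ} {L : ℝ≥0} {T : ℝ}

namespace IsPhaseSol

variable {u v : ℝ → ℝ}

lemma abs_snd_zero_lt (h : IsPhaseSol q G u v) (hq : LocallyIntegrable q volume) {a B C : ℝ}
    (ha : 0 < a) (hu : ∀ t ∈ Icc 0 a, u t ∈ Ico 0 B) (hC : ∀ t ∈ Icc 0 a, |G (u t)| ≤ C) :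
    |v 0| < B / a + C * ∫ r in 0..a, |q r| := by
  have h0 : (0 : ℝ) ∈ Icc 0 a := left_mem_Icc.mpr ha.le
  obtain ⟨ξ, hξ, hslope⟩ := exists_hasDerivAt_eq_slope u v ha h.continuous_fst.continuousOn
    fun s _ => h.hasDerivAt s
  have hvξ : |v ξ| < B / a := by
    rw [hslope, sub_zero, abs_div, abs_of_pos ha]
    refine div_lt_div_of_pos_right (abs_sub_lt_iff.mpr ?_) ha
    constructor <;> linarith [(hu 0 h0).1, (hu 0 h0).2, (hu a (right_mem_Icc.mpr ha.le)).1,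
      (hu a (right_mem_Icc.mpr ha.le)).2]
  calc |v 0| ≤ |v ξ| + |v 0 - v ξ| := by simpa using abs_add_le (v ξ) (v 0 - v ξ)
    _ < B / a + C * ∫ r in 0..a, |q r| :=
        add_lt_add_of_lt_of_le hvξ (h.abs_snd_sub_le hq hC (Ioo_subset_Icc_self hξ) h0)

lemma mul_lt_fst_left (h : IsPhaseSol q G u v) (hq : LocallyIntegrable q volume) {s t C y : ℝ}
    (hst : s ≤ t) (hC : ∀ r ∈ Icc s t, |G (u r)| ≤ C) (hy : C * ∫ r in s..t, |q r| ≤ y / 2)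
    (hut : 0 < u t) (hv : v s ≤ -y) : y / 2 * (t - s) < u s := by
  have hdecrease := h.sub_le_mul_sub (c := -(y / 2)) hst fun r hr => by
    linarith [(le_abs_self _).trans (h.abs_snd_sub_le hq hC (left_mem_Icc.mpr hst) hr)]
  linarith

lemma mul_lt_fst_right (h : IsPhaseSol q G u v) (hq : LocallyIntegrable q volume) {s t C y : ℝ}
    (hst : s ≤ t) (hC : ∀ r ∈ Icc s t, |G (u r)| ≤ C) (hy : C * ∫ r in s..t, |q r| ≤ y / 2)
    (hus : 0 < u s) (hv : y ≤ v t) : y / 2 * (t - s) < u t := by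
  have hincrease := h.mul_sub_le_sub (c := y / 2) hst fun r hr => by
    linarith [(le_abs_self _).trans (h.abs_snd_sub_le hq hC hr (right_mem_Icc.mpr hst))]
  linarith

end IsPhaseSol

lemma exists_initial_bound (hq : LocallyIntegrable q volume) (hG : LipschitzWith L G)
    (hG0 : ∀ s ≤ 0, G s = 0) {a B : ℝ} (ha : 0 < a) (haT : a ≤ T)
    (hB : ∀ u v, IsPhaseSol q G u v → (∀ t ∈ Icc 0 a, 0 ≤ u t) → ∀ t ∈ Icc 0 a, u t < B) :
    ∃ R, ∀ u v, IsPhaseSol q G u v → 0 < u 0 → u 0 ≤ u T → u 0 < R ∧ |v 0| < R := by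
  set Q := ∫ r in 0..a, |q r|
  have hQ : 0 ≤ Q := intervalIntegral.integral_nonneg ha.le fun _ _ => abs_nonneg _
  have h0 : (0 : ℝ) ∈ Icc 0 a := left_mem_Icc.mpr ha.le
  have hB0 : 0 < B := hB _ _ (IsPhaseSol.zero (hG0 0 le_rfl)) (fun _ _ => le_rfl) 0 h0
  refine ⟨B + (B / a + L * B * Q), fun u v h hu0 huT => ?_⟩
  have hpos : ∀ t ∈ Icc 0 a, 0 ≤ u t := fun t ht =>
    (h.pos_of_pos hq hG hG0 hu0 (hu0.trans_le huT) t ⟨ht.1, ht.2.trans haT⟩).le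
  have hlt := hB u v h hpos
  have hGu : ∀ t ∈ Icc 0 a, |G (u t)| ≤ L * B := fun t ht =>
    (hG.norm_le_mul (hG0 0 le_rfl) (u t)).trans <| by
      rw [Real.norm_of_nonneg (hpos t ht)]
      exact mul_le_mul_of_nonneg_left (hlt t ht).le L.2
  constructor
  · exact (hlt 0 h0).trans_le (le_add_of_nonneg_right (by positivity))
  · exact (h.abs_snd_zero_lt hq ha (fun t ht => ⟨hpos t ht, hlt t ht⟩) hGu).trans_le
      (le_add_of_nonneg_left hB0.le)

lemma eventually_fst_lt_of_snd_eq (hq : LocallyIntegrable q volume) (hG : LipschitzWith L G)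
    (hG0 : ∀ s ≤ 0, G s = 0) (hGsmall : ∀ η : ℝ≥0, 0 < η → ∃ r > 0, LipschitzOnWith η G (Icc 0 r))
    (hT : 0 < T) : ∀ᶠ y in nhdsWithin 0 (Ioi 0), ∀ u v, IsPhaseSol q G u v → |u 0| ≤ y → v 0 = y →
      u 0 < u T := by
  set Q := ∫ s in 0..T, |q s|
  obtain ⟨Γ, hΓ, hbound⟩ := IsPhaseSol.exists_norm_le hq hG (hG0 0 le_rfl) T
  obtain ⟨η, hη, hηQ⟩ := exists_pos_mul_lt one_pos (Γ * Q)
  lift η to ℝ≥0 using hη.le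
  obtain ⟨r, hr, hGη⟩ := hGsmall η hη
  filter_upwards [Ioo_mem_nhdsGT (div_pos hr hΓ)] with y hy u v h hu0 hv0
  have huy : ∀ t ∈ Icc 0 T, |u t| ≤ Γ * y := fun t ht =>
    (norm_fst_le (u t, v t)).trans <| (hbound u v h t ht).trans <|
      mul_le_mul_of_nonneg_left (max_le hu0 (by rw [hv0, Real.norm_of_nonneg hy.1.le])) hΓ.le
  have hΓr : Γ * y ≤ r := ((lt_div_iff₀' hΓ).mp hy.2).le
  have hGu : ∀ t ∈ Icc 0 T, |G (u t)| ≤ η * (Γ * y) := fun t ht => by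
    rcases le_total (u t) 0 with hneg | hpos
    · rw [hG0 _ hneg, abs_zero]
      have := hy.1
      positivity
    · have hdist := hGη.dist_le_mul (u t)
        ⟨hpos, (le_abs_self _).trans ((huy t ht).trans hΓr)⟩ 0 ⟨le_rfl, hr.le⟩
      rw [hG0 0 le_rfl, dist_zero_right, dist_zero_right] at hdist
      exact hdist.trans (mul_le_mul_of_nonneg_left (huy t ht) η.2)
  have hincrease := h.mul_sub_le_sub (c := y * (1 - Γ * Q * η)) hT.le fun t ht => by
    linarith [(neg_abs_le _).trans' (neg_le_neg
      (h.abs_snd_sub_le hq hGu (left_mem_Icc.mpr hT.le) ht))]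
  have hslope : 0 < y * (1 - Γ * Q * η) * (T - 0) :=
    mul_pos (mul_pos hy.1 (sub_pos.mpr hηQ)) (by linarith)
  linarith

lemma eventually_snd_lt_of_fst_eq (hq : LocallyIntegrable q volume) (hG : LipschitzWith L G)
    (hG0 : G 0 = 0) (hGpos : ∀ s > 0, 0 < G s)
    (hGsmall : ∀ η : ℝ≥0, 0 < η → ∃ r > 0, LipschitzOnWith η G (Icc 0 r)) (hT : 0 < T)
    (hqmean : ∫ t in 0..T, q t < 0) :
    ∀ᶠ y in nhdsWithin 0 (Ioi 0), ∀ u v, IsPhaseSol q G u v → ‖(u 0, v 0)‖ ≤ y →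
      (∀ t ∈ Icc 0 T, 0 < u t) → u T = u 0 → v 0 < v T := by
  obtain ⟨Γ, hΓ, hbound⟩ := IsPhaseSol.exists_norm_le hq hG hG0 T
  obtain ⟨η, hη, hηQ⟩ := exists_pos_mul_lt (neg_pos.mpr hqmean) (T * (∫ s in 0..T, |q s|) ^ 2)
  lift η to ℝ≥0 using hη.le
  obtain ⟨r, hr, hGη⟩ := hGsmall η hη
  filter_upwards [Ioo_mem_nhdsGT (div_pos hr hΓ)] with y hy u v h huv hpos huT
  refine h.snd_lt_snd_of_small hq hT hG.continuous hGη hGpos (by linarith) (fun t ht => ?_) huT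
  refine ⟨hpos t ht, ?_⟩
  calc u t ≤ ‖(u t, v t)‖ := (le_abs_self _).trans (norm_fst_le (u t, v t))
    _ ≤ Γ * y := (hbound u v h t ht).trans (mul_le_mul_of_nonneg_left huv hΓ.le)
    _ ≤ r := ((lt_div_iff₀' hΓ).mp hy.2).le

lemma eventually_snd_bounds_of_fst_le (hq : LocallyIntegrable q volume) (hG : LipschitzWith L G)
    (hG0 : G 0 = 0) (hT : 0 < T) (R : ℝ) {y : ℝ} (hy : 0 < y) :
    ∀ᶠ ε in nhdsWithin 0 (Ioi 0), ∀ u v, IsPhaseSol q G u v → ‖(u 0, v 0)‖ ≤ R →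
      (∀ t ∈ Icc 0 T, 0 < u t) → (u 0 ≤ ε → -y < v 0) ∧ (u T ≤ ε → v T < y) := by
  obtain ⟨Γ, hΓ, hbound⟩ := IsPhaseSol.exists_norm_le hq hG hG0 T
  set C := L * (Γ * R)
  have hqabs : LocallyIntegrable (fun t => |q t|) volume := fun t => (hq t).norm
  obtain ⟨d, ⟨hd0, hdT⟩, hleft, hright⟩ : ∃ d ∈ Ioo 0 T,
      C * ∫ r in 0..d, |q r| < y / 2 ∧ C * ∫ r in (T - d)..T, |q r| < y / 2 := by
    have hcleft : Continuous fun d => C * ∫ r in 0..d, |q r| :=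
      (continuous_integral_of_locallyIntegrable hqabs 0).const_mul C
    have hcright : Continuous fun d => C * ∫ r in (T - d)..T, |q r| := by
      simp only [intervalIntegral.integral_symm T]
      exact ((continuous_integral_of_locallyIntegrable hqabs T).neg.comp
        (continuous_sub_left T)).const_mul C
    have hevleft : ∀ᶠ d in nhds 0, C * ∫ r in 0..d, |q r| < y / 2 :=
      hcleft.continuousAt.eventually (gt_mem_nhds (by simpa using hy))
    have hevright : ∀ᶠ d in nhds 0, C * ∫ r in (T - d)..T, |q r| < y / 2 :=
      hcright.continuousAt.eventually (gt_mem_nhds (by simpa using hy))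
    exact (((hevleft.and hevright).filter_mono nhdsWithin_le_nhds).and
      (Ioo_mem_nhdsGT hT)).exists.imp fun d hd => ⟨hd.2, hd.1⟩
  filter_upwards [Ioo_mem_nhdsGT (mul_pos (half_pos hy) hd0)] with ε hε u v h huv hpos
  have hGu : ∀ t ∈ Icc 0 T, |G (u t)| ≤ C := fun t ht =>
    (hG.norm_le_mul hG0 (u t)).trans <| mul_le_mul_of_nonneg_left
      ((norm_fst_le (u t, v t)).trans <|
        (hbound u v h t ht).trans (mul_le_mul_of_nonneg_left huv hΓ.le)) L.2
  constructor
  · intro hu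
    by_contra! hv
    linarith [hε.2, h.mul_lt_fst_left hq hd0.le (fun r hr => hGu r ⟨hr.1, hr.2.trans hdT.le⟩)
      hleft.le (hpos d ⟨hd0.le, hdT.le⟩) hv]
  · intro hu
    by_contra! hv
    linarith [hε.2, h.mul_lt_fst_right hq (sub_le_self T hd0.le)
      (fun r hr => hGu r ⟨by linarith [hr.1], hr.2⟩) hright.le
      (hpos (T - d) ⟨by linarith, by linarith⟩) hv]

theorem exists_isPhaseSol_of_rectangle (hq : LocallyIntegrable q volume) (hG : LipschitzWith L G)
    (hG0 : G 0 = 0) {a b c d y₀ : ℝ} (hab : a ≤ b) (hc : c ≤ y₀) (hd : y₀ ≤ d)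
    (hbot : ∀ u v, IsPhaseSol q G u v → u 0 ∈ Icc a b → v 0 = c → u T < u 0)
    (htop : ∀ u v, IsPhaseSol q G u v → u 0 ∈ Icc a b → v 0 = d → u T < u 0)
    (hright : ∀ u v, IsPhaseSol q G u v → u 0 = b → v 0 ∈ Icc c d → u T < u 0)
    (hmid : ∀ u v, IsPhaseSol q G u v → u 0 = a → v 0 = y₀ → u 0 < u T)
    (hlow : ∀ u v, IsPhaseSol q G u v → u 0 = a → v 0 ∈ Icc c y₀ → u T = u 0 → v 0 < v T)
    (hup : ∀ u v, IsPhaseSol q G u v → u 0 = a → v 0 ∈ Icc y₀ d → u T = u 0 → v T < v 0) :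
    ∃ u v, IsPhaseSol q G u v ∧ u 0 ∈ Icc a b ∧ u T = u 0 ∧ v T = v 0 := by
  obtain ⟨U, V, hUV, hcont⟩ := exists_phaseFlow hq hG hG0 0
  choose hsol hU hV using hUV
  set F : ℝ × ℝ → ℂ := fun z => Complex.equivRealProdCLM.symm (U z T - z.1, V z T - z.2)
  have hF : Continuous F := Complex.equivRealProdCLM.symm.continuous.comp <|
    ((hcont T).1.sub continuous_fst).prodMk ((hcont T).2.sub continuous_snd)
  have hre : ∀ z, (F z).re = U z T - U z 0 := fun z => by simp [F, hU]
  have him : ∀ z, (F z).im = V z T - V z 0 := fun z => by simp [F, hV]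
  obtain ⟨z, hz, hFz⟩ : ∃ z ∈ Icc a b ×ˢ Icc c d, F z = 0 := by
    refine exists_eq_zero_of_rectangle hF hab hc hd ?_ ?_ ?_ ?_ ?_ ?_ <;>
      simp only [hre, him, sub_neg, sub_pos, sub_eq_zero]
    · exact fun x hx => hbot _ _ (hsol _) (by rwa [hU]) (hV _)
    · exact fun x hx => htop _ _ (hsol _) (by rwa [hU]) (hV _)
    · exact fun y hy => hright _ _ (hsol _) (hU _) (by rwa [hV])
    · exact hmid _ _ (hsol _) (hU _) (hV _)
    · exact fun y hy => hlow _ _ (hsol _) (hU _) (by rwa [hV])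
    · exact fun y hy => hup _ _ (hsol _) (hU _) (by rwa [hV])
  have hzre := hre z
  have hzim := him z
  rw [hFz] at hzre hzim
  exact ⟨U z, V z, hsol z, (hU z).symm ▸ hz.1, (sub_eq_zero.mp hzre.symm),
    (sub_eq_zero.mp hzim.symm)⟩

theorem exists_isPhaseSol_pos_periodic (hq : LocallyIntegrable q volume) (hG : LipschitzWith L G)
    (hG0 : ∀ s ≤ 0, G s = 0) (hGpos : ∀ s > 0, 0 < G s)
    (hGsmall : ∀ η : ℝ≥0, 0 < η → ∃ r > 0, LipschitzOnWith η G (Icc 0 r)) (hT : 0 < T)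
    (hqmean : ∫ t in 0..T, q t < 0) {a B : ℝ} (ha : 0 < a) (haT : a ≤ T)
    (hB : ∀ u v, IsPhaseSol q G u v → (∀ t ∈ Icc 0 a, 0 ≤ u t) → ∀ t ∈ Icc 0 a, u t < B) :
    ∃ u v, IsPhaseSol q G u v ∧ u T = u 0 ∧ v T = v 0 ∧ ∀ t ∈ Icc 0 T, 0 < u t := by
  have hG00 := hG0 0 le_rfl
  obtain ⟨R, hR⟩ := exists_initial_bound hq hG hG0 ha haT hB
  obtain ⟨y₀, ⟨hmid, hsmall⟩, hy₀⟩ := (((eventually_fst_lt_of_snd_eq hq hG hG0 hGsmall hT).and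
    (eventually_snd_lt_of_fst_eq hq hG hG00 hGpos hGsmall hT hqmean)).and
    self_mem_nhdsWithin).exists
  obtain ⟨ε, hedge, hε, hεy⟩ := ((eventually_snd_bounds_of_fst_le hq hG hG00 hT (max R y₀)
    hy₀).and (Ioo_mem_nhdsGT hy₀)).exists
  have hRR' : R ≤ max R y₀ := le_max_left _ _
  have hyR' : y₀ ≤ max R y₀ := le_max_right _ _
  have hfar : ∀ u v, IsPhaseSol q G u v → ε ≤ u 0 → R ≤ u 0 ∨ R ≤ |v 0| → u T < u 0 := by
    intro u v h hu hle
    by_contra! huT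
    have hlt := hR u v h (hε.trans_le hu) huT
    exact hle.elim hlt.1.not_ge hlt.2.not_ge
  have hpos : ∀ u v, IsPhaseSol q G u v → ε ≤ u 0 → u T = u 0 → ∀ t ∈ Icc 0 T, 0 < u t :=
    fun u v h hu huT => h.pos_of_pos hq hG hG0 (by linarith) (by linarith)
  have hnorm : ∀ {x y r : ℝ}, x = ε → y₀ ≤ r → |y| ≤ r → ‖(x, y)‖ ≤ r := fun hx hr hy =>
    max_le (by rw [hx, Real.norm_of_nonneg hε.le]; linarith) hy
  obtain ⟨u, v, h, hu, huT, hvT⟩ :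
      ∃ u v, IsPhaseSol q G u v ∧ u 0 ∈ Icc ε (max R y₀) ∧ u T = u 0 ∧ v T = v 0 := by
    refine exists_isPhaseSol_of_rectangle (c := -max R y₀) (d := max R y₀) (y₀ := y₀)
      hq hG hG00 (by linarith) (by linarith) hyR' ?_ ?_ ?_ ?_ ?_ ?_ <;> intro u v h hu hv
    · exact hfar u v h hu.1 (.inr (by rw [hv, abs_neg]; exact hRR'.trans (le_abs_self _)))
    · exact hfar u v h hu.1 (.inr (by rw [hv]; exact hRR'.trans (le_abs_self _)))
    · exact hfar u v h (by linarith) (.inl (by linarith))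
    · exact hmid u v h (by rw [hu, abs_of_pos hε]; exact hεy.le) hv
    · intro huT
      have hvR : |v 0| ≤ max R y₀ := abs_le.mpr ⟨hv.1, hv.2.trans hyR'⟩
      have hvy := (hedge u v h (hnorm hu hyR' hvR) (hpos u v h hu.ge huT)).1 hu.le
      exact hsmall u v h (hnorm hu le_rfl (abs_le.mpr ⟨hvy.le, hv.2⟩)) (hpos u v h hu.ge huT) huT
    · intro huT
      have hvR : |v 0| ≤ max R y₀ := abs_le.mpr ⟨by linarith [hv.1], hv.2⟩
      exact ((hedge u v h (hnorm hu hyR' hvR) (hpos u v h hu.ge huT)).2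
        (huT.trans hu).le).trans_le hv.1
  exact ⟨u, v, h, huT, hvT, hpos u v h hu.1 huT⟩

end PeriodicSolution

section Truncation

/-- The extension of `g` from `[0, N]` to a globally Lipschitz function on `ℝ`: constant on
`(-∞, 0]` and affine with slope `K` on `[N, ∞)`. -/
def truncation (g : ℝ → ℝ) (K : ℝ≥0) (N s : ℝ) : ℝ :=
  g (max 0 (min N s)) + K * max (s - N) 0

variable {g : ℝ → ℝ} {K : ℝ≥0} {M N s : ℝ}

lemma truncation_of_nonpos (hN : 0 ≤ N) (hs : s ≤ 0) : truncation g K N s = g 0 := by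
  simp [truncation, hs, hs.trans hN]

lemma truncation_of_mem (hs : s ∈ Icc 0 N) : truncation g K N s = g s := by
  simp [truncation, hs.1, hs.2]

lemma truncation_of_le (hN : 0 ≤ N) (hs : N ≤ s) : truncation g K N s = g N + K * (s - N) := by
  simp [truncation, hN, hs]

lemma truncation_pos (hg : ∀ s > 0, 0 < g s) (hN : 0 < N) (hs : 0 < s) :
    0 < truncation g K N s :=
  add_pos_of_pos_of_nonneg (hg _ (lt_max_of_lt_right (lt_min hN hs))) (by positivity)

lemma mul_le_truncation (hg : ∀ s ≥ M, K * s ≤ g s) (hM : 0 ≤ M) (hMN : M ≤ N) (hs : M ≤ s) :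
    K * s ≤ truncation g K N s := by
  rcases le_total s N with hsN | hNs
  · exact (truncation_of_mem ⟨hM.trans hs, hsN⟩).symm ▸ hg s hs
  · rw [truncation_of_le (hM.trans hMN) hNs]
    linarith [hg N hMN]

lemma exists_lipschitzWith_truncation (hg : LocallyLipschitzOn (Ici 0) g) (hN : 0 ≤ N) :
    ∃ L, LipschitzWith L (truncation g K N) := by
  obtain ⟨L, hL⟩ :=
    (hg.mono Icc_subset_Ici_self).exists_lipschitzOnWith_of_compact (isCompact_Icc (b := N))
  have hclamp : LipschitzWith 1 fun s : ℝ => max 0 (min N s) :=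
    (LipschitzWith.id.const_min N).const_max 0
  have hexcess : LipschitzWith (‖(K : ℝ)‖₊ * 1) fun s : ℝ => K * max (s - N) 0 :=
    (lipschitzWith_smul (K : ℝ)).comp ((IsometryEquiv.subRight N).isometry.lipschitz.max_const 0)
  have hmem : MapsTo (fun s : ℝ => max 0 (min N s)) univ (Icc 0 N) := fun s _ =>
    ⟨le_max_left _ _, max_le hN (min_le_left _ _)⟩
  have hinner := lipschitzOnWith_univ.mp (hL.comp hclamp.lipschitzOnWith hmem)
  exact ⟨_, hinner.add hexcess⟩

lemma exists_lipschitzOnWith_truncation {η : ℝ≥0} (hg : ∃ r > 0, LipschitzOnWith η g (Icc 0 r))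
    (hN : 0 < N) : ∃ r > 0, LipschitzOnWith η (truncation g K N) (Icc 0 r) := by
  obtain ⟨r, hr, hL⟩ := hg
  refine ⟨min r N, lt_min hr hN, fun x hx y hy => ?_⟩
  rw [truncation_of_mem ⟨hx.1, hx.2.trans (min_le_right _ _)⟩,
    truncation_of_mem ⟨hy.1, hy.2.trans (min_le_right _ _)⟩]
  exact hL ⟨hx.1, hx.2.trans (min_le_left _ _)⟩ ⟨hy.1, hy.2.trans (min_le_left _ _)⟩

end Truncation

lemma IsPhaseSol.isSol {q G g u v : ℝ → ℝ} (h : IsPhaseSol q G u v)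
    (hq : LocallyIntegrable q volume) (hG : Continuous G) (hGg : ∀ t, G (u t) = g (u t)) :
    IsSol (fun t s => q t * g s) u := by
  refine ⟨v, h.hasDerivAt, ?_, fun t => ?_⟩ <;> simp only [← hGg]
  · exact locallyIntegrable_iff.mpr fun k hk =>
      (hq.integrableOn_isCompact hk).mul_continuousOn (hG.comp h.continuous_fst).continuousOn hk
  · linarith [h.sub_eq_integral 0 t]

lemma SignCond.exists_isSignPartition {q : ℝ → ℝ} {T : ℝ} {m : ℕ} (h : SignCond q T m) :
    ∃ σ, IsSignPartition q T m σ := by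
  obtain ⟨σ, hzero, hlast, hlt, hpos, hneg⟩ := h
  exact ⟨σ, hzero, hlast, fun i hi => (hlt i hi).le, hpos, fun i hi =>
    (hneg i hi).1.mono fun _ => neg_nonneg.mp⟩

lemma exists_lipschitzOnWith_Icc_of_derivWithin_eq_zero {g : ℝ → ℝ}
    (hg : ContDiffOn ℝ 1 g (Ici 0)) (hg' : derivWithin g (Ici 0) 0 = 0) {η : ℝ≥0} (hη : 0 < η) :
    ∃ r > 0, LipschitzOnWith η g (Icc 0 r) := by
  have hcont := (hg.continuousOn_derivWithin (uniqueDiffOn_Ici 0) le_rfl).nnnorm 0 self_mem_Ici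
  have hev : ∀ᶠ x in nhdsWithin 0 (Ici 0), ‖derivWithin g (Ici 0) x‖₊ < η :=
    hcont.eventually (gt_mem_nhds (by simpa [hg'] using hη))
  obtain ⟨r, hr, hsub⟩ := mem_nhdsGE_iff_exists_Icc_subset.mp hev
  exact ⟨r, hr, (convex_Icc 0 r).lipschitzOnWith_of_nnnorm_hasDerivWithin_le
    (fun x hx => ((hg.differentiableOn one_ne_zero x hx.1).hasDerivWithinAt).mono
      Icc_subset_Ici_self) fun x hx => (hsub hx).le⟩

lemma eventually_mul_le_of_tendsto_div {g : ℝ → ℝ}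
    (hg : Tendsto (fun s => g s / s) atTop atTop) (K : ℝ) : ∀ᶠ s in atTop, K * s ≤ g s := by
  filter_upwards [hg.eventually_ge_atTop K, eventually_gt_atTop 0] with s hs hs0
  exact (le_div_iff₀ hs0).mp hs

namespace IsSignPartition

variable {q G : ℝ → ℝ} {T : ℝ} {m : ℕ} {σ : ℕ → ℝ} {L : ℝ≥0}

theorem exists_periodic_mem_Ioo (hσ : IsSignPartition q T m σ) (hT : 0 < T)
    (hqper : Function.Periodic q T) (hqloc : LocallyIntegrable q volume)
    (hqmean : ∫ t in 0..T, q t < 0) (hG : LipschitzWith L G) (hG0 : ∀ s ≤ 0, G s = 0)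
    (hGpos : ∀ s > 0, 0 < G s)
    (hGsmall : ∀ η : ℝ≥0, 0 < η → ∃ r > 0, LipschitzOnWith η G (Icc 0 r)) {B : ℝ}
    (hB : ∀ i < m, ∀ u v, IsPhaseSol q G u v →
      (∀ t ∈ Icc (σ (2 * i)) (σ (2 * i + 1)), 0 ≤ u t) →
      ∀ t ∈ Icc (σ (2 * i)) (σ (2 * i + 1)), u t < B) :
    ∃ u v, IsPhaseSol q G u v ∧ (∀ t, u t ∈ Ioo 0 B) ∧ Function.Periodic u T := by
  have hm := hσ.zero_lt hT
  have hσ1 : σ 1 ∈ Ioc 0 T := ⟨hσ.zero ▸ (hσ.posOn 0 hm).lt,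
    (hσ.Icc_subset (i := 0) (by omega) (right_mem_Icc.mpr (hσ.posOn 0 hm).lt.le)).2⟩
  obtain ⟨u, v, h, huT, hvT, hpos⟩ := exists_isPhaseSol_pos_periodic hqloc hG hG0 hGpos
    hGsmall hT hqmean hσ1.1 hσ1.2 (by simpa [hσ.zero] using hB 0 hm)
  have hG_nonneg : ∀ s, 0 ≤ G s := fun s =>
    (le_or_gt s 0).elim (fun hs => (hG0 s hs).ge) fun hs => (hGpos s hs).le
  have hlt : ∀ t ∈ Icc 0 T, u t < B := hσ.lt_of_forall_even_lt hT h hG_nonneg huT fun i hi =>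
    hB i hi u v h fun t ht => (hpos t (hσ.Icc_subset (by omega) ht)).le
  have hper : Function.Periodic u T := h.periodic hqloc hG (hG0 0 le_rfl) hqper huT hvT
  refine ⟨u, v, h, fun t => ?_, hper⟩
  obtain ⟨s, hs, hts⟩ := hper.exists_mem_Ico₀ hT t
  exact hts ▸ ⟨hpos s (Ico_subset_Icc_self hs), hlt s (Ico_subset_Icc_self hs)⟩

end IsSignPartition

theorem stmt2_general {T : ℝ} (hT : 0 < T) {q : ℝ → ℝ} (hqper : Function.Periodic q T)
    (hqloc : LocallyIntegrable q volume) {m : ℕ} {σ : ℕ → ℝ} (hσ : IsSignPartition q T m σ)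
    (hqmean : ∫ t in 0..T, q t < 0) :
    ∃ K : ℝ≥0, ∀ g : ℝ → ℝ, LocallyLipschitzOn (Ici 0) g →
      (∀ η : ℝ≥0, 0 < η → ∃ r > 0, LipschitzOnWith η g (Icc 0 r)) → g 0 = 0 →
      (∀ s > 0, 0 < g s) → (∀ᶠ s in atTop, K * s ≤ g s) →
      ∃ u, IsSol (fun t s => q t * g s) u ∧ (∀ t, 0 < u t) ∧ Function.Periodic u T := by
  obtain ⟨K, C, hKC⟩ := hσ.exists_aprioriBoundOn hqloc
  refine ⟨K.toNNReal, fun g hg hgsmall hg0 hgpos hgK => ?_⟩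
  obtain ⟨M, hgM, hM⟩ :=
    ((eventually_forall_ge_atTop.mpr hgK).and (eventually_gt_atTop 0)).exists
  set N := max M (C * M)
  have hN : 0 < N := hM.trans_le (le_max_left _ _)
  set G := truncation g K.toNNReal N
  obtain ⟨L, hL⟩ : ∃ L, LipschitzWith L G := exists_lipschitzWith_truncation hg hN.le
  have hG0 : ∀ s ≤ 0, G s = 0 := fun s hs => (truncation_of_nonpos hN.le hs).trans hg0
  have hGpos : ∀ s > 0, 0 < G s := fun s => truncation_pos hgpos hN
  have hG_nonneg : ∀ s, 0 ≤ G s := fun s =>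
    (le_or_gt s 0).elim (fun hs => (hG0 s hs).ge) fun hs => (hGpos s hs).le
  obtain ⟨u, v, h, hu, hper⟩ := hσ.exists_periodic_mem_Ioo hT hqper hqloc hqmean hL hG0 hGpos
    (fun η hη => exists_lipschitzOnWith_truncation (hgsmall η hη) hN) (B := C * M)
    fun i hi u v => (hKC i hi).mono K.le_coe_toNNReal le_rfl hL.continuous hG_nonneg hM
      fun s => mul_le_truncation hgM hM.le (le_max_left _ _)
  have hGg : ∀ t, G (u t) = g (u t) := fun t =>
    truncation_of_mem ⟨(hu t).1.le, (hu t).2.le.trans (le_max_right _ _)⟩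
  exact ⟨u, h.isSol hqloc hL.continuous hGg, fun t => (hu t).1, hper⟩

/-- Theorem 2.1: under `(q#)`, `(q*)`, `(g*)`, `(gs)` the equation
`u'' + q(t) g(u) = 0` has at least one positive `T`-periodic solution. -/
theorem stmt2 (T : ℝ) (hT : 0 < T) (q : ℝ → ℝ)
    (hqper : Function.Periodic q T)
    (hqloc : MeasureTheory.LocallyIntegrable q MeasureTheory.volume)
    (m : ℕ) (hm : 1 ≤ m) (hqsign : SignCond q T m)
    (hqmean : (∫ t in (0:ℝ)..T, q t) < 0)
    (g : ℝ → ℝ) (hgC1 : ContDiffOn ℝ 1 g (Set.Ici 0))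
    (hg0 : g 0 = 0) (hgpos : ∀ s : ℝ, 0 < s → 0 < g s)
    (hg'0 : derivWithin g (Set.Ici 0) 0 = 0)
    (hgsup : Filter.Tendsto (fun s => g s / s) Filter.atTop Filter.atTop) :
    ∃ u : ℝ → ℝ,
      IsSol (fun t s => q t * g s) u ∧ (∀ t, 0 < u t) ∧ Function.Periodic u T := by
  obtain ⟨σ, hσ⟩ := hqsign.exists_isSignPartition
  obtain ⟨K, hK⟩ := stmt2_general hT hqper hqloc hσ hqmean
  exact hK g (hgC1.locallyLipschitzOn (convex_Ici 0))
    (fun _ => exists_lipschitzOnWith_Icc_of_derivWithin_eq_zero hgC1 hg'0) hg0 hgpos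
    (eventually_mul_le_of_tendsto_div hgsup K)
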